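/- arXiv:1106.4714 — 3 statements merged into one kernel-verified Lean document; each statement's English description precedes it below -/
import Mathlib

section
/- Suppose c > (q−1)² and β > −ln(1 − q/(1+√c)). Then the quenched pressure is strictly less than the annealed pressure in the thermodynamic limit: p(β,c) = lim_{N→∞} p_N(β,c) < 𝒫(β,c). -/
open MeasureTheory Filter

/-- Poisson probability mass function with parameter `lam`. -/
noncomputable def poissonPMF (lam : ℝ) (k : ℕ) : ℝ :=
  Real.exp (-lam) * lam ^ k / (Nat.factorial k)

/-- Potts Hamiltonian `H_N(σ, J) = Σ_{i,j} J_{ij} δ(σ_i, σ_j)`. -/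
noncomputable def potts.H (q N : ℕ) (σ : Fin N → Fin q) (J : Fin N → Fin N → ℝ) : ℝ :=
  ∑ i, ∑ j, J i j * (if σ i = σ j then (1 : ℝ) else 0)

/-- Partition function `Z_N(J)`. -/
noncomputable def potts.Z (q N : ℕ) (J : Fin N → Fin N → ℝ) : ℝ :=
  ∑ σ : Fin N → Fin q, Real.exp (- potts.H q N σ J)

/-- Expectation over the Poissonian disorder: the entries `J_{ij}` are independent
Poisson random variables with means `c_{ij} / (2N)`. -/
noncomputable def potts.E (N : ℕ) (c : Fin N → Fin N → ℝ)
    (g : (Fin N → Fin N → ℕ) → ℝ) : ℝ :=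
  ∑' J : Fin N → Fin N → ℕ,
    (∏ i, ∏ j, poissonPMF (c i j / (2 * N)) (J i j)) * g J

/-- Quenched pressure for a general nonnegative connectivity matrix `c`. -/
noncomputable def potts.pmat (q N : ℕ) (β : ℝ) (c : Fin N → Fin N → ℝ) : ℝ :=
  potts.E N c (fun J => (1 / N) * Real.log (potts.Z q N (fun i j => β * (J i j : ℝ))))

/-- Quenched pressure for the constant connectivity matrix `c_{ij} ≡ c`. -/
noncomputable def potts.p (q N : ℕ) (β c : ℝ) : ℝ :=
  potts.pmat q N β (fun _ _ => c)

/-- Annealed pressure `𝒫(β, c) = ln q + (c/2) ln(1 - (1 - e^{-β})/q)`. -/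
noncomputable def potts.annealed (q : ℕ) (β c : ℝ) : ℝ :=
  Real.log q + (c / 2) * Real.log (1 - (1 - Real.exp (-β)) / q)

open scoped NNReal in
noncomputable def Pm {E : Type} [Fintype E] (l : E → ℝ≥0) : Measure (E → ℕ) :=
  Measure.pi fun e => ProbabilityTheory.poissonMeasure (l e)

section general
open scoped NNReal
variable {E : Type} [Fintype E]

instance (l : E → ℝ≥0) : IsProbabilityMeasure (Pm l) := by unfold Pm; infer_instance

lemma Pm_real_singleton (l : E → ℝ≥0) (J : E → ℕ) :
    (Pm l).real {J} = ∏ e, (Real.exp (-(l e)) * (l e : ℝ) ^ (J e) / (Nat.factorial (J e))) := by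
  unfold Pm
  rw [measureReal_def, Measure.pi_singleton, ENNReal.toReal_prod]
  refine Finset.prod_congr rfl fun e _ => ?_
  rw [← measureReal_def, ProbabilityTheory.poissonMeasure_real_singleton]

lemma Pm_hasSum (l : E → ℝ≥0) (g : (E → ℕ) → ℝ) (hg : Integrable g (Pm l)) :
    HasSum (fun J => (Pm l).real {J} * g J) (∫ J, g J ∂(Pm l)) := by
  have h1 := Measure.sum_smul_dirac (Pm l)
  rw [← h1] at hg
  have := hasSum_integral_measure hg
  rw [h1] at this
  simpa [measureReal_def] using this

lemma Pm_map {E' : Type} [Fintype E'] (l : E → ℝ≥0) (f : E' → E) (hf : f.Injective) :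
    (Pm l).map (fun J => J ∘ f) = Pm (l ∘ f) := by
  have h1 : ProbabilityTheory.iIndepFun (fun (e : E) (J : E → ℕ) => J e) (Pm l) :=
    ProbabilityTheory.iIndepFun_pi (X := fun _ => id) (fun _ => aemeasurable_id)
  have h2 := h1.precomp hf
  have h3 := h2.map_fun_eq_pi_map (fun i => (measurable_pi_apply _).aemeasurable)
  have : (fun J : E → ℕ => J ∘ f) = fun J i => J (f i) := rfl
  rw [this, h3]
  unfold Pm
  congr 1
  funext i
  exact (measurePreserving_eval (fun e => ProbabilityTheory.poissonMeasure (l e)) (f i)).map_eq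

lemma Pm_integral_comp {E' : Type} [Fintype E'] (l : E → ℝ≥0) (f : E' → E) (hf : f.Injective)
    (g : (E' → ℕ) → ℝ) :
    ∫ J, g (J ∘ f) ∂(Pm l) = ∫ J, g J ∂(Pm (l ∘ f)) := by
  rw [← Pm_map l f hf, integral_map Measurable.of_discrete.aemeasurable (Measurable.of_discrete.aestronglyMeasurable)]

lemma Pm_ae_zero (l : E → ℝ≥0) (e : E) (he : l e = 0) : ∀ᵐ J ∂(Pm l), J e = 0 := by
  have h := (measurePreserving_eval (fun e => ProbabilityTheory.poissonMeasure (l e)) e)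
  have h2 : ∀ᵐ n ∂(ProbabilityTheory.poissonMeasure (l e)), n = 0 := by
    rw [he, ae_iff_of_countable]
    intro n hn
    by_contra h0
    rw [ProbabilityTheory.poissonMeasure_singleton] at hn
    simp [h0] at hn
  exact h.quasiMeasurePreserving.ae h2

lemma poisson_integrable_id (r : ℝ≥0) :
    Integrable (fun n : ℕ => (n : ℝ)) (ProbabilityTheory.poissonMeasure r) := by
  rw [ProbabilityTheory.integrable_poissonMeasure_iff]
  rw [← summable_nat_add_iff 1]
  have := ((ProbabilityTheory.hasSum_one_poissonMeasure r).summable).mul_left (r : ℝ)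
  refine this.congr fun n => ?_
  rw [Nat.factorial_succ]
  have : ((n : ℝ) + 1) ≠ 0 := by positivity
  simp
  rw [abs_of_nonneg (by positivity)]
  field_simp
  ring

lemma Pm_integrable_eval (l : E → ℝ≥0) (e : E) : Integrable (fun J => (J e : ℝ)) (Pm l) :=
  (measurePreserving_eval (fun e => ProbabilityTheory.poissonMeasure (l e)) e).integrable_comp_of_integrable
    (poisson_integrable_id (l e))

/-- linear growth -/
def LinGrowth (g : (E → ℕ) → ℝ) : Prop := ∃ a b : ℝ, ∀ J, |g J| ≤ a + b * ∑ e, (J e : ℝ)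

lemma LinGrowth.integrable {g : (E → ℕ) → ℝ} (hg : LinGrowth g) (l : E → ℝ≥0) :
    Integrable g (Pm l) := by
  obtain ⟨a, b, h⟩ := hg
  refine Integrable.mono' (g := fun J => a + b * ∑ e, (J e : ℝ)) ?_
    (Measurable.of_discrete.aestronglyMeasurable) (Filter.Eventually.of_forall h)
  exact (integrable_const a).add
    ((integrable_finsetSum _ fun e _ => Pm_integrable_eval l e).const_mul b)

end general
section compare
set_option linter.unusedSectionVars false
open scoped NNReal
variable {E : Type} [Fintype E] [DecidableEq E]

lemma _root_.HasSum.congr_aux {ι : Type*} {f g : ι → ℝ} {a : ℝ} (h : HasSum g a) (hfg : ∀ i, f i = g i) :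
    HasSum f a := by
  rw [show f = g from funext hfg]; exact h

/-- shift operator -/
noncomputable def Tsh (l : E → ℝ) (g : (E → ℕ) → ℝ) : (E → ℕ) → ℝ :=
  fun J => ∑ e, l e * g (J + Pi.single e 1)

noncomputable def Lg (g : (E → ℕ) → ℝ) : MvPolynomial E ℝ →ₗ[ℝ] ℝ :=
  (MvPolynomial.basisMonomials E ℝ).constr ℝ (fun m => g m)

lemma Lg_monomial (g : (E → ℕ) → ℝ) (m : E →₀ ℕ) (a : ℝ) :
    Lg g (MvPolynomial.monomial m a) = a * g m := by
  have h : Lg g (MvPolynomial.monomial m 1) = g m := by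
    have := (MvPolynomial.basisMonomials E ℝ).constr_basis ℝ (fun m => g m) m
    rw [MvPolynomial.coe_basisMonomials] at this
    exact this
  have h2 : MvPolynomial.monomial m a = a • MvPolynomial.monomial m (1 : ℝ) := by
    simp [MvPolynomial.smul_monomial]
  rw [h2, map_smul, h, smul_eq_mul]

lemma Lg_mul (l : E → ℝ) (g : (E → ℕ) → ℝ) (S : MvPolynomial E ℝ) :
    Lg g ((∑ e, MvPolynomial.C (l e) * MvPolynomial.X e) * S) = Lg (Tsh l g) S := by
  induction S using MvPolynomial.induction_on' with
  | monomial m a =>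
    rw [Finset.sum_mul, map_sum, Lg_monomial, Tsh, Finset.mul_sum]
    refine Finset.sum_congr rfl fun e _ => ?_
    rw [MvPolynomial.X, MvPolynomial.C_mul_monomial, MvPolynomial.monomial_mul, Lg_monomial]
    simp [Finsupp.single_eq_pi_single, add_comm]
    ring
  | add f h ih1 ih2 => rw [mul_add, map_add, ih1, ih2, map_add]

lemma Lg_pow (l : E → ℝ) (K : ℕ) (g : (E → ℕ) → ℝ) :
    Lg g ((∑ e, MvPolynomial.C (l e) * MvPolynomial.X e) ^ K) = (Tsh l)^[K] g 0 := by
  induction K generalizing g with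
  | zero =>
    rw [pow_zero, ← MvPolynomial.C_1, ← MvPolynomial.monomial_zero', Lg_monomial]
    simp
  | succ K ih => rw [pow_succ', Lg_mul, ih, Function.iterate_succ_apply]

lemma Lg_pow' (l : E → ℝ) (K : ℕ) (g : (E → ℕ) → ℝ) :
    Lg g ((∑ e, MvPolynomial.C (l e) * MvPolynomial.X e) ^ K) =
     ∑ J ∈ Finset.piAntidiag Finset.univ K, (Nat.multinomial Finset.univ J : ℝ) *
       (∏ e, l e ^ J e) * g J := by
  rw [Finset.sum_pow_eq_sum_piAntidiag, map_sum]
  refine Finset.sum_congr rfl fun J _ => ?_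
  have : (Nat.multinomial Finset.univ J : MvPolynomial E ℝ) *
      ∏ i, (MvPolynomial.C (l i) * MvPolynomial.X i) ^ J i =
      MvPolynomial.monomial (Finsupp.equivFunOnFinite.symm J)
        ((Nat.multinomial Finset.univ J : ℝ) * (∏ e, l e ^ J e)) := by
    rw [MvPolynomial.monomial_eq, map_mul, map_prod]
    simp_rw [mul_pow]
    rw [Finset.prod_mul_distrib, Finsupp.prod_fintype _ _ (by simp)]
    simp [mul_assoc]
  rw [this, Lg_monomial]
  simp

lemma Pm_hasSum_iter (l : E → ℝ≥0) (g : (E → ℕ) → ℝ) (hg : Integrable g (Pm l)) :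
    HasSum (fun K : ℕ => Real.exp (-(∑ e, (l e : ℝ))) / (Nat.factorial K) *
      (Tsh (fun e => (l e : ℝ)))^[K] g 0) (∫ J, g J ∂(Pm l)) := by
  have h := (Pm_hasSum l g hg).tsum_fiberwise (fun J : E → ℕ => ∑ e, J e)
  refine h.congr_aux fun K => ?_
  have hs : ((fun J : E → ℕ => ∑ e, J e) ⁻¹' {K}) =
      ((Finset.piAntidiag (Finset.univ : Finset E) K : Finset (E → ℕ)) : Set (E → ℕ)) := by
    ext J; simp
  rw [hs, Finset.tsum_subtype' (Finset.piAntidiag (Finset.univ : Finset E) K)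
    (fun J => (Pm l).real {J} * g J), ← Lg_pow, Lg_pow', Finset.mul_sum]
  refine Finset.sum_congr rfl fun J hJ => ?_
  have hJ' : ∑ e, J e = K := by simpa using hJ
  rw [Pm_real_singleton]
  have h1 := Nat.multinomial_spec Finset.univ J
  rw [hJ'] at h1
  have h2 : ((∏ e, (Nat.factorial (J e)) : ℕ) : ℝ) * (Nat.multinomial Finset.univ J : ℝ)
     = (Nat.factorial K : ℝ) := by exact_mod_cast h1
  rw [Finset.prod_div_distrib, Finset.prod_mul_distrib, ← Real.exp_sum, Finset.sum_neg_distrib]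
  push_cast at h2
  have h3 : (∏ e, (Nat.factorial (J e) : ℝ)) ≠ 0 :=
    Finset.prod_ne_zero_iff.2 fun e _ => by positivity
  have h4 : (Nat.factorial K : ℝ) ≠ 0 := by positivity
  rw [← h2] at h4 ⊢
  have h5 : (Nat.multinomial Finset.univ J : ℝ) ≠ 0 := right_ne_zero_of_mul h4
  field_simp

lemma Tsh_mono (l : E → ℝ) (hl : ∀ e, 0 ≤ l e) {g h : (E → ℕ) → ℝ} (C : ℝ)
    (H : ∀ J, g J ≤ h J + C) (J : E → ℕ) : Tsh l g J ≤ Tsh l h J + C * ∑ e, l e := by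
  unfold Tsh
  rw [Finset.mul_sum, ← Finset.sum_add_distrib]
  refine Finset.sum_le_sum fun e _ => ?_
  have := mul_le_mul_of_nonneg_left (H (J + Pi.single e 1)) (hl e)
  linarith

lemma Tsh_mono_iter (l : E → ℝ) (hl : ∀ e, 0 ≤ l e) {g h : (E → ℕ) → ℝ} (C : ℝ)
    (H : ∀ J, g J ≤ h J + C) (K : ℕ) (J : E → ℕ) :
    (Tsh l)^[K] g J ≤ (Tsh l)^[K] h J + C * (∑ e, l e) ^ K := by
  induction K generalizing J with
  | zero => simpa using H J
  | succ K ih =>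
    rw [Function.iterate_succ_apply', Function.iterate_succ_apply', pow_succ, ← mul_assoc]
    exact Tsh_mono l hl _ ih J

lemma Tsh_comm (l l' : E → ℝ) : Function.Commute (Tsh l) (Tsh l') := by
  intro g
  funext J
  unfold Tsh
  simp_rw [Finset.mul_sum]
  rw [Finset.sum_comm]
  refine Finset.sum_congr rfl fun e _ => Finset.sum_congr rfl fun e' _ => ?_
  rw [add_right_comm]; ring

lemma Tsh_compare (l l' : E → ℝ) (hl : ∀ e, 0 ≤ l e) (hl' : ∀ e, 0 ≤ l' e)
    (hs : ∑ e, l e = ∑ e, l' e) (g : (E → ℕ) → ℝ) (C : ℝ)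
    (H : ∀ J, Tsh l' g J ≤ Tsh l g J + C) (K : ℕ) (J : E → ℕ) :
    (Tsh l')^[K] g J ≤ (Tsh l)^[K] g J + C * (K * (∑ e, l e) ^ (K - 1)) := by
  induction K generalizing J with
  | zero => simp
  | succ K ih =>
    rw [Function.iterate_succ_apply']
    have h1 := Tsh_mono l' hl' _ ih J
    have h2 := Tsh_mono_iter l hl C H K J
    rw [(Tsh_comm l l').iterate_left K g, ← Function.iterate_succ_apply (Tsh l)] at h2
    have h3 : (K : ℝ) * (∑ e, l e) ^ (K - 1) * (∑ e, l e) = K * (∑ e, l e) ^ K := by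
      cases K with
      | zero => simp
      | succ K => simp [pow_succ]; ring
    rw [← hs] at h1
    push_cast
    have h4 : C * ((K : ℝ) * (∑ e, l e) ^ (K - 1)) * (∑ e, l e) = C * (K * (∑ e, l e) ^ K) := by
      rw [mul_assoc, h3]
    linarith

lemma compare_eq (l l' : E → ℝ≥0)
    (hs : ∑ e, (l e : ℝ) = ∑ e, (l' e : ℝ)) (g : (E → ℕ) → ℝ) (hg : LinGrowth g) (C : ℝ)
    (H : ∀ J, Tsh (fun e => (l' e : ℝ)) g J ≤ Tsh (fun e => (l e : ℝ)) g J + C) :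
    ∫ J, g J ∂(Pm l') ≤ ∫ J, g J ∂(Pm l) + C := by
  have h1 := Pm_hasSum_iter l g (hg.integrable l)
  have h2 := Pm_hasSum_iter l' g (hg.integrable l')
  rw [← hs] at h2
  set L := ∑ e, (l e : ℝ) with hL
  have h3 : HasSum (fun K : ℕ => Real.exp (-L) / (Nat.factorial K) * (C * (K * L ^ (K - 1)))) C := by
    have hh : HasSum (fun n : ℕ => Real.exp (-L) * L ^ n / (Nat.factorial n)) 1 := by
      have := ProbabilityTheory.hasSum_one_poissonMeasure (∑ e, l e)
      push_cast at this
      exact this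
    rw [← hasSum_nat_add_iff' 1]
    have := hh.mul_left C
    simp only [mul_one] at this
    simp only [Finset.range_one, Finset.sum_singleton, Nat.cast_zero, zero_mul, mul_zero, sub_zero]
    refine this.congr_aux fun n => ?_
    rw [Nat.factorial_succ, Nat.add_sub_cancel]
    push_cast
    have : ((n : ℝ) + 1) ≠ 0 := by positivity
    field_simp
  refine hasSum_le (fun K => ?_) h2 (h1.add h3)
  rw [← mul_add]
  refine mul_le_mul_of_nonneg_left ?_ (by positivity)
  exact Tsh_compare _ _ (fun e => (l e).2) (fun e => (l' e).2) hs g C H K 0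

lemma compare_gen (l l' : E → ℝ≥0) (g : (E → ℕ) → ℝ) (hg : LinGrowth g) (C : ℝ)
    (H : ∀ J, ∑ e, ((l' e : ℝ) - l e) * (g (J + Pi.single e 1) - g J) ≤ C) :
    ∫ J, g J ∂(Pm l') ≤ ∫ J, g J ∂(Pm l) + C := by
  let m : Option E → ℝ≥0 := fun o => o.elim (∑ e, l' e) l
  let m' : Option E → ℝ≥0 := fun o => o.elim (∑ e, l e) l'
  have hm : ∫ J, g J ∂(Pm l) = ∫ J, g (J ∘ some) ∂(Pm m) :=
    (Pm_integral_comp m some (Option.some_injective E) g).symm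
  have hm' : ∫ J, g J ∂(Pm l') = ∫ J, g (J ∘ some) ∂(Pm m') :=
    (Pm_integral_comp m' some (Option.some_injective E) g).symm
  rw [hm, hm']
  refine compare_eq m m' ?_ (fun J => g (J ∘ some)) ?_ C fun J => ?_
  · simp [m, m', Fintype.sum_option, add_comm]
  · obtain ⟨a, b, h⟩ := hg
    refine ⟨a, |b|, fun J => (h _).trans ?_⟩
    rw [Fintype.sum_option]
    have h1 : (0 : ℝ) ≤ ∑ e, (J (some e) : ℝ) := by positivity
    have h2 : b * ∑ e, (J (some e) : ℝ) ≤ |b| * ∑ e, (J (some e) : ℝ) :=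
      mul_le_mul_of_nonneg_right (le_abs_self b) h1
    have h3 : 0 ≤ |b| * (J none : ℝ) := by positivity
    simp only [Function.comp]
    linarith [mul_add |b| (J none : ℝ) (∑ e, (J (some e) : ℝ))]
  · have hH := H (J ∘ some)
    have e1 : (J + Pi.single none 1) ∘ some = J ∘ (some : E → Option E) := by
      funext e; simp
    have e2 : ∀ e : E, (J + Pi.single (some e) 1) ∘ some = J ∘ (some : E → Option E) + Pi.single e 1 := by
      intro e; funext e'
      by_cases h : e' = e
      · subst h; simp
      · simp [h]
    unfold Tsh
    rw [Fintype.sum_option, Fintype.sum_option]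
    simp only [e1, e2, m, m', Option.elim]
    simp only [sub_mul, mul_sub, Finset.sum_sub_distrib, ← Finset.sum_mul] at hH
    push_cast
    linarith

end compare
section model
open scoped NNReal
set_option linter.unusedSectionVars false
variable {E : Type} [Fintype E] [DecidableEq E] {Ω : Type} [Fintype Ω] [Nonempty Ω]

noncomputable def Zf (ψ : E → Ω → ℝ) (J : E → ℕ) : ℝ := ∑ σ, ∏ e, ψ e σ ^ J e
noncomputable def Ff (ψ : E → Ω → ℝ) (J : E → ℕ) : ℝ := Real.log (Zf ψ J)

lemma Zf_pos {ψ : E → Ω → ℝ} (hψ : ∀ e σ, 0 < ψ e σ) (J : E → ℕ) : 0 < Zf ψ J :=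
  Finset.sum_pos (fun σ _ => Finset.prod_pos fun e _ => pow_pos (hψ e σ) _) Finset.univ_nonempty

lemma Ff_growth {ψ : E → Ω → ℝ} (hψ : ∀ e σ, 0 < ψ e σ) : LinGrowth (Ff ψ) := by
  obtain ⟨b, hb⟩ : ∃ b : ℝ, ∀ e σ, |Real.log (ψ e σ)| ≤ b := by
    refine ⟨∑ e, ∑ σ, |Real.log (ψ e σ)|, fun e σ => ?_⟩
    have h1 : |Real.log (ψ e σ)| ≤ ∑ σ, |Real.log (ψ e σ)| :=
      Finset.single_le_sum (f := fun σ => |Real.log (ψ e σ)|) (fun _ _ => abs_nonneg _) (Finset.mem_univ σ)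
    exact h1.trans (Finset.single_le_sum (f := fun e => ∑ σ, |Real.log (ψ e σ)|)
      (fun _ _ => Finset.sum_nonneg fun _ _ => abs_nonneg _) (Finset.mem_univ e))
  have hcard : (1 : ℝ) ≤ Fintype.card Ω := by exact_mod_cast Fintype.card_pos
  refine ⟨Real.log (Fintype.card Ω), b, fun J => ?_⟩
  have key : ∀ σ, |Real.log (∏ e, ψ e σ ^ J e)| ≤ b * ∑ e, (J e : ℝ) := by
    intro σ
    rw [Real.log_prod (fun e _ => (pow_pos (hψ e σ) _).ne'), Finset.mul_sum]
    refine (Finset.abs_sum_le_sum_abs _ _).trans (Finset.sum_le_sum fun e _ => ?_)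
    rw [Real.log_pow, abs_mul, Nat.abs_cast, mul_comm]
    exact mul_le_mul_of_nonneg_right (hb e σ) (by positivity)
  have hpos : ∀ σ, 0 < ∏ e, ψ e σ ^ J e := fun σ => Finset.prod_pos fun e _ => pow_pos (hψ e σ) _
  set B := b * ∑ e, (J e : ℝ)
  have hc0 : (0 : ℝ) < Fintype.card Ω := by linarith
  unfold Ff
  rw [abs_le]
  constructor
  · have : Real.exp (-B) ≤ Zf ψ J := by
      obtain ⟨σ⟩ := ‹Nonempty Ω›
      have h1 : Real.exp (-B) ≤ ∏ e, ψ e σ ^ J e := by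
        rw [← Real.le_log_iff_exp_le (hpos σ)]
        exact (abs_le.1 (key σ)).1
      exact h1.trans (Finset.single_le_sum (f := fun σ => ∏ e, ψ e σ ^ J e)
        (fun σ _ => (hpos σ).le) (Finset.mem_univ σ))
    have := (Real.le_log_iff_exp_le (Zf_pos hψ J)).2 this
    have := Real.log_nonneg hcard
    linarith
  · rw [Real.log_le_iff_le_exp (Zf_pos hψ J), Real.exp_add, Real.exp_log hc0]
    unfold Zf
    calc ∑ σ, ∏ e, ψ e σ ^ J e ≤ ∑ σ : Ω, Real.exp B := Finset.sum_le_sum fun σ _ => by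
          rw [← Real.log_le_iff_le_exp (hpos σ)]
          exact (abs_le.1 (key σ)).2
      _ = _ := by simp

lemma prod_pow_add_single (ψ : E → Ω → ℝ) (J : E → ℕ) (e : E) (σ : Ω) :
    ∏ e', ψ e' σ ^ ((J + Pi.single e 1 : E → ℕ) e') = (∏ e', ψ e' σ ^ J e') * ψ e σ := by
  simp only [Pi.add_apply, pow_add, Finset.prod_mul_distrib]
  congr 1
  rw [Finset.prod_eq_single e]
  · simp
  · intro b _ hb; simp [hb]
  · simp

lemma compare_model {ψ : E → Ω → ℝ} (hψ : ∀ e σ, 0 < ψ e σ) (l l' : E → ℝ≥0) (C : ℝ)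
    (H : ∀ w : Ω → ℝ, (∀ σ, 0 < w σ) → ∑ σ, w σ = 1 →
      ∑ e, ((l' e : ℝ) - l e) * Real.log (∑ σ, w σ * ψ e σ) ≤ C) :
    ∫ J, Ff ψ J ∂(Pm l') ≤ ∫ J, Ff ψ J ∂(Pm l) + C := by
  refine compare_gen l l' _ (Ff_growth hψ) C fun J => ?_
  have hZ := Zf_pos hψ J
  have := H (fun σ => (∏ e, ψ e σ ^ J e) / Zf ψ J)
    (fun σ => div_pos (Finset.prod_pos fun e _ => pow_pos (hψ e σ) _) hZ)
    (by rw [← Finset.sum_div]; exact div_self hZ.ne')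
  convert this using 3 with e
  unfold Ff
  rw [← Real.log_div (Zf_pos hψ _).ne' hZ.ne']
  congr 1
  conv_lhs => rw [Zf, Finset.sum_div]
  refine Finset.sum_congr rfl fun σ _ => ?_
  rw [prod_pow_add_single]; ring

lemma psd_pow {A I : Type} [Fintype A] [Fintype I] (ρ : I → ℝ) (hρ : ∀ i, 0 ≤ ρ i)
    (U : A → I → ℝ) (θ : A → ℝ) (m : ℕ) :
    0 ≤ ∑ a, ∑ b, θ a * θ b * (∑ i, ρ i * U a i * U b i) ^ m := by
  have h : ∑ a, ∑ b, θ a * θ b * (∑ i, ρ i * U a i * U b i) ^ m =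
      ∑ f : Fin m → I, (∏ k, ρ (f k)) * (∑ a, θ a * ∏ k, U a (f k)) ^ 2 := by
    have h1 : ∀ a b, (∑ i, ρ i * U a i * U b i) ^ m =
        ∑ f : Fin m → I, (∏ k, ρ (f k)) * (∏ k, U a (f k)) * (∏ k, U b (f k)) := by
      intro a b
      rw [Finset.sum_pow']
      simp [Finset.prod_mul_distrib]
    simp_rw [h1, Finset.mul_sum, sq, Finset.sum_mul, Finset.mul_sum]
    have e1 : ∀ a, ∑ b, ∑ f : Fin m → I, θ a * θ b *
        ((∏ k, ρ (f k)) * (∏ k, U a (f k)) * (∏ k, U b (f k))) = ∑ f : Fin m → I, ∑ b, θ a * θ b *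
        ((∏ k, ρ (f k)) * (∏ k, U a (f k)) * (∏ k, U b (f k))) := fun a => Finset.sum_comm
    simp_rw [e1]
    rw [Finset.sum_comm]
    refine Finset.sum_congr rfl fun f _ => Finset.sum_congr rfl fun a _ =>
      Finset.sum_congr rfl fun b _ => ?_
    ring
  rw [h]
  exact Finset.sum_nonneg fun f _ => mul_nonneg (Finset.prod_nonneg fun k _ => hρ _) (sq_nonneg _)

lemma psd_log {A I : Type} [Fintype A] [Fintype I] (ρ : I → ℝ) (hρ : ∀ i, 0 ≤ ρ i)
    (U : A → I → ℝ) (θ : A → ℝ) (t : A → A → ℝ)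
    (ht : ∀ a b, t a b = ∑ i, ρ i * U a i * U b i) (ht0 : ∀ a b, 0 ≤ t a b)
    (ht1 : ∀ a b, t a b < 1) :
    ∑ a, ∑ b, θ a * θ b * Real.log (1 - t a b) ≤ 0 := by
  have h1 : HasSum (fun n : ℕ => ∑ a, ∑ b, θ a * θ b * (t a b ^ (n + 1) / ((n : ℝ) + 1)))
      (∑ a, ∑ b, θ a * θ b * (-Real.log (1 - t a b))) := by
    refine hasSum_sum fun a _ => hasSum_sum fun b _ => HasSum.mul_left _ ?_
    exact Real.hasSum_pow_div_log_of_abs_lt_one (by rw [abs_of_nonneg (ht0 a b)]; exact ht1 a b)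
  have h2 : 0 ≤ ∑ a, ∑ b, θ a * θ b * (-Real.log (1 - t a b)) := by
    refine h1.nonneg fun n => ?_
    have := psd_pow ρ hρ U θ (n + 1)
    simp_rw [← ht] at this
    have h3 : ∑ a, ∑ b, θ a * θ b * (t a b ^ (n + 1) / ((n : ℝ) + 1)) =
        (∑ a, ∑ b, θ a * θ b * t a b ^ (n + 1)) / ((n : ℝ) + 1) := by
      simp_rw [Finset.sum_div, mul_div_assoc]
    rw [h3]; positivity
  simp only [mul_neg, Finset.sum_neg_distrib] at h2
  linarith

end model
section graph
open scoped NNReal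
set_option linter.unusedSectionVars false

noncomputable def gψ (V : Type) (q : ℕ) (x : ℝ) : V × V → (V → Fin q) → ℝ :=
  fun e σ => if σ e.1 = σ e.2 then x else 1

lemma gψ_pos {V : Type} {q : ℕ} {x : ℝ} (hx : 0 < x) (e : V × V) (σ : V → Fin q) :
    0 < gψ V q x e σ := by
  unfold gψ; split_ifs <;> linarith

noncomputable def Phi (V : Type) [Fintype V] [DecidableEq V] (q : ℕ) (x c : ℝ) : ℝ :=
  ∫ J, Ff (gψ V q x) J ∂(Pm fun _ : V × V => Real.toNNReal (c / (2 * Fintype.card V)))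

lemma potts_Z_eq (q N : ℕ) (β : ℝ) (J : Fin N → Fin N → ℕ) :
    potts.Z q N (fun i j => β * (J i j : ℝ)) =
      Zf (gψ (Fin N) q (Real.exp (-β))) (Function.uncurry J) := by
  unfold potts.Z Zf potts.H
  refine Finset.sum_congr rfl fun σ _ => ?_
  rw [← Finset.sum_neg_distrib, Real.exp_sum, Fintype.prod_prod_type]
  refine Finset.prod_congr rfl fun i _ => ?_
  rw [← Finset.sum_neg_distrib, Real.exp_sum]
  refine Finset.prod_congr rfl fun j _ => ?_
  simp only [gψ, Function.uncurry]
  split_ifs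
  · rw [← Real.exp_nat_mul]; congr 1; ring
  · simp

lemma potts_link (q N : ℕ) (hq : 2 ≤ q) (hN : N ≠ 0) (β c : ℝ) (hc : 0 < c) :
    potts.p q N β c = (1 / N) * Phi (Fin N) q (Real.exp (-β)) c := by
  have : NeZero q := ⟨by omega⟩
  unfold potts.p potts.pmat potts.E Phi
  have hg : LinGrowth (Ff (gψ (Fin N) q (Real.exp (-β)))) :=
    Ff_growth (gψ_pos (Real.exp_pos _))
  set l : Fin N × Fin N → ℝ≥0 := fun _ => Real.toNNReal (c / (2 * Fintype.card (Fin N))) with hl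
  have h := (Pm_hasSum l _ (hg.integrable l)).tsum_eq
  rw [← h, ← tsum_mul_left, ← (Equiv.curry (Fin N) (Fin N) ℕ).symm.tsum_eq]
  refine tsum_congr fun J => ?_
  beta_reduce
  rw [Pm_real_singleton, Fintype.prod_prod_type, potts_Z_eq]
  have : ∀ i j, poissonPMF (c / (2 * N)) (J i j) = Real.exp (-(l (i, j))) * (l (i, j) : ℝ) ^ (J i j) / (Nat.factorial (J i j)) := by
    intro i j
    have : (l (i, j) : ℝ) = c / (2 * N) := by
      simp only [hl, Fintype.card_fin]
      exact Real.coe_toNNReal _ (by positivity)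
    rw [this]; rfl
  simp_rw [this]
  simp only [Equiv.curry_symm_apply, Function.uncurry, Ff]
  ring_nf

lemma Phi_equiv {V V' : Type} [Fintype V] [Fintype V'] [DecidableEq V] [DecidableEq V'] (e : V ≃ V') (q : ℕ) (x c : ℝ) :
    Phi V q x c = Phi V' q x c := by
  unfold Phi
  have h := Pm_integral_comp (fun _ : V' × V' => Real.toNNReal (c / (2 * Fintype.card V')))
    (Prod.map e e) (e.injective.prodMap e.injective) (Ff (gψ V q x))
  rw [Fintype.card_congr e]
  refine h.symm.trans ?_
  congr 1
  funext J
  unfold Ff Zf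
  congr 1
  refine Fintype.sum_equiv (e.arrowCongr (Equiv.refl _)) _ _ fun σ => ?_
  refine Fintype.prod_equiv (e.prodCongr e) _ _ fun a => ?_
  simp [gψ]

/-- inequality on Gibbs weights, in kernel form -/
lemma kernel_sum {V : Type} [Fintype V] [DecidableEq V] (q : ℕ) (x : ℝ) (w : (V → Fin q) → ℝ)
    (hw1 : ∑ σ, w σ = 1) (i j : V) :
    ∑ σ, w σ * gψ V q x (i, j) σ = 1 - ∑ p : (V → Fin q) × Fin q, ((1 - x) * w p.1) *
      (if p.1 i = p.2 then 1 else 0) * (if p.1 j = p.2 then 1 else 0) := by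
  rw [Fintype.sum_prod_type, eq_sub_iff_add_eq, ← Finset.sum_add_distrib]
  refine (Finset.sum_congr rfl fun σ _ => ?_).trans hw1
  simp only [gψ]
  rw [Finset.sum_eq_single (σ i)]
  · by_cases h : σ i = σ j
    · simp [h]; ring
    · simp [h, Ne.symm h]
  · intro b _ hb; simp [Ne.symm hb]
  · simp

lemma Phi_superadd (V W : Type) [Fintype V] [Fintype W] [DecidableEq V] [DecidableEq W]
    [Nonempty V] [Nonempty W] (q : ℕ) (hq : 2 ≤ q) (x c : ℝ) (hx0 : 0 < x) (hx1 : x < 1) (hc : 0 < c) :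
    Phi V q x c + Phi W q x c ≤ Phi (V ⊕ W) q x c := by
  have : NeZero q := ⟨by omega⟩
  have hpos := gψ_pos (V := V ⊕ W) (q := q) hx0
  set a : ℝ := ((Fintype.card V : ℕ) : ℝ) with ha
  set b : ℝ := ((Fintype.card W : ℕ) : ℝ) with hb
  have ha0 : 0 < a := by rw [ha]; exact_mod_cast Fintype.card_pos
  have hb0 : 0 < b := by rw [hb]; exact_mod_cast Fintype.card_pos
  let l' : (V ⊕ W) × (V ⊕ W) → ℝ≥0 := fun e => match e with
    | (Sum.inl _, Sum.inl _) => Real.toNNReal (c / (2 * a))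
    | (Sum.inr _, Sum.inr _) => Real.toNNReal (c / (2 * b))
    | _ => 0
  have h1 : ∫ J, Ff (gψ (V ⊕ W) q x) J ∂(Pm l') = Phi V q x c + Phi W q x c := by
    have hinjV : Function.Injective (Prod.map (Sum.inl : V → V ⊕ W) (Sum.inl : V → V ⊕ W)) :=
      Sum.inl_injective.prodMap Sum.inl_injective
    have hinjW : Function.Injective (Prod.map (Sum.inr : W → V ⊕ W) (Sum.inr : W → V ⊕ W)) :=
      Sum.inr_injective.prodMap Sum.inr_injective
    have e1 := Pm_integral_comp l' _ hinjV (Ff (gψ V q x))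
    have e2 := Pm_integral_comp l' _ hinjW (Ff (gψ W q x))
    have e1' : Phi V q x c = ∫ J, Ff (gψ V q x) (J ∘ (Prod.map Sum.inl Sum.inl)) ∂(Pm l') := e1.symm
    have e2' : Phi W q x c = ∫ J, Ff (gψ W q x) (J ∘ (Prod.map Sum.inr Sum.inr)) ∂(Pm l') := e2.symm
    have i1 : Integrable (fun J => Ff (gψ V q x) (J ∘ (Prod.map (Sum.inl : V → V ⊕ W) (Sum.inl : V → V ⊕ W)))) (Pm l') := by
      have := (Ff_growth (gψ_pos (V := V) (q := q) hx0)).integrable (l' ∘ (Prod.map Sum.inl Sum.inl))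
      rw [← Pm_map l' _ hinjV] at this
      exact this.comp_measurable Measurable.of_discrete
    have i2 : Integrable (fun J => Ff (gψ W q x) (J ∘ (Prod.map (Sum.inr : W → V ⊕ W) (Sum.inr : W → V ⊕ W)))) (Pm l') := by
      have := (Ff_growth (gψ_pos (V := W) (q := q) hx0)).integrable (l' ∘ (Prod.map Sum.inr Sum.inr))
      rw [← Pm_map l' _ hinjW] at this
      exact this.comp_measurable Measurable.of_discrete
    rw [e1', e2', ← integral_add i1 i2]
    refine integral_congr_ae ?_
    have z1 : ∀ᵐ J ∂(Pm l'), ∀ p : V × W, J (Sum.inl p.1, Sum.inr p.2) = 0 :=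
      ae_all_iff.2 fun p => Pm_ae_zero l' _ rfl
    have z2 : ∀ᵐ J ∂(Pm l'), ∀ p : V × W, J (Sum.inr p.2, Sum.inl p.1) = 0 :=
      ae_all_iff.2 fun p => Pm_ae_zero l' _ rfl
    filter_upwards [z1, z2] with J hz1 hz2
    unfold Ff
    rw [← Real.log_mul (Zf_pos (gψ_pos hx0) _).ne' (Zf_pos (gψ_pos hx0) _).ne']
    congr 1
    unfold Zf
    rw [Finset.sum_mul_sum, ← Fintype.sum_prod_type']
    refine Fintype.sum_equiv (Equiv.sumArrowEquivProdArrow V W (Fin q)) _ _ fun σ => ?_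
    rw [Fintype.prod_prod_type, Fintype.prod_prod_type, Fintype.prod_prod_type, Fintype.prod_sum_type]
    simp_rw [Fintype.prod_sum_type]
    have hz1' : ∀ v w, J (Sum.inl v, Sum.inr w) = 0 := fun v w => hz1 (v, w)
    have hz2' : ∀ v w, J (Sum.inr w, Sum.inl v) = 0 := fun v w => hz2 (v, w)
    simp only [hz1', hz2', gψ, Equiv.sumArrowEquivProdArrow, pow_zero, Finset.prod_const_one, one_mul, mul_one]
    rfl
  rw [← h1]
  have := compare_model hpos (fun _ => Real.toNNReal (c / (2 * Fintype.card (V ⊕ W)))) l' 0 ?_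
  · rw [add_zero] at this; exact this
  intro w hw0 hw1
  set K : V ⊕ W → V ⊕ W → ℝ := fun i j => Real.log (∑ σ, w σ * gψ (V ⊕ W) q x (i, j) σ) with hK
  let θ : V ⊕ W → ℝ := Sum.elim (fun _ => 1 / a) (fun _ => - (1 / b))
  have hks := kernel_sum (V := V ⊕ W) q x w hw1
  have hpsd := psd_log (A := V ⊕ W) (I := ((V ⊕ W) → Fin q) × Fin q)
    (fun p => (1 - x) * w p.1) (fun p => mul_nonneg (by linarith) (hw0 _).le)
    (fun i p => if p.1 i = p.2 then 1 else 0) θ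
    (fun i j => 1 - ∑ σ, w σ * gψ (V ⊕ W) q x (i, j) σ)
    (fun i j => by rw [hks]; ring)
    (fun i j => by
      have h : ∑ σ, w σ * gψ (V ⊕ W) q x (i, j) σ ≤ ∑ σ, w σ := by
        refine Finset.sum_le_sum fun σ _ => ?_
        have : gψ (V ⊕ W) q x (i, j) σ ≤ 1 := by unfold gψ; split_ifs <;> linarith
        nlinarith [hw0 σ]
      linarith)
    (fun i j => by
      have : 0 < ∑ σ, w σ * gψ (V ⊕ W) q x (i, j) σ :=
        Finset.sum_pos (fun σ _ => mul_pos (hw0 σ) (hpos _ _)) Finset.univ_nonempty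
      linarith)
  simp only [sub_sub_cancel] at hpsd
  change ∑ i, ∑ j, θ i * θ j * K i j ≤ 0 at hpsd
  rw [Fintype.sum_prod_type]
  change ∑ i, ∑ j, ((l' (i, j) : ℝ) - Real.toNNReal (c / (2 * Fintype.card (V ⊕ W)))) * K i j ≤ 0
  have hcard : (Fintype.card (V ⊕ W) : ℝ) = a + b := by simp [ha, hb]
  rw [hcard]
  have c1 : ((Real.toNNReal (c / (2 * (a + b))) : ℝ≥0) : ℝ) = c / (2 * (a + b)) :=
    Real.coe_toNNReal _ (by positivity)
  have c2 : ((Real.toNNReal (c / (2 * a)) : ℝ≥0) : ℝ) = c / (2 * a) :=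
    Real.coe_toNNReal _ (by positivity)
  have c3 : ((Real.toNNReal (c / (2 * b)) : ℝ≥0) : ℝ) = c / (2 * b) :=
    Real.coe_toNNReal _ (by positivity)
  rw [c1]
  have key : ∀ i j, ((l' (i, j) : ℝ) - c / (2 * (a + b))) * K i j =
      (c * a * b / (2 * (a + b))) * (θ i * θ j * K i j) := by
    intro i j
    rcases i with i | i <;> rcases j with j | j <;> simp only [l', θ, Sum.elim_inl, Sum.elim_inr, c2, c3] <;>
      simp <;> field_simp <;> ring
  simp_rw [key, ← Finset.mul_sum]
  exact mul_nonpos_of_nonneg_of_nonpos (by positivity) hpsd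

end graph

section rs
open scoped NNReal
set_option linter.unusedSectionVars false

def sg (b : Bool) : ℝ := if b then 1 else -1

def gg {q : ℕ} (s : Fin q) : ℝ := if s.val = 0 then 1 else if s.val = 1 then -1 else 0

lemma gg_sum (q : ℕ) (hq : 2 ≤ q) (f : ℝ → ℝ) :
    ∑ s : Fin q, f (gg s) = f 1 + f (-1) + ((q : ℝ) - 2) * f 0 := by
  obtain ⟨n, rfl⟩ : ∃ n, q = n + 2 := ⟨q - 2, by omega⟩
  rw [Fin.sum_univ_succ, Fin.sum_univ_succ]
  simp [gg]
  ring

lemma gg_abs {q : ℕ} (s : Fin q) : |gg s| ≤ 1 := by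
  unfold gg; split_ifs <;> simp

lemma sg_abs (b : Bool) : |sg b| = 1 := by
  cases b <;> simp [sg]

lemma sgg_abs {q : ℕ} (b : Bool) (s : Fin q) : |sg b * gg s| ≤ 1 := by
  rw [abs_mul, sg_abs, one_mul]; exact gg_abs s

noncomputable def sψ (q : ℕ) (τ : ℝ) : Bool → Fin q → ℝ := fun b s => 1 - τ * (sg b * gg s)

lemma sψ_pos {q : ℕ} {τ : ℝ} (h0 : 0 ≤ τ) (h1 : τ < 1) (b : Bool) (s : Fin q) : 0 < sψ q τ b s := by
  have := abs_le.1 (sgg_abs b s)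
  unfold sψ
  nlinarith [this.2]

noncomputable def rψ (V : Type) (q : ℕ) (x τ : ℝ) : (V × V) ⊕ (V × Bool) → (V → Fin q) → ℝ :=
  Sum.elim (gψ V q x) (fun p σ => sψ q τ p.2 (σ p.1))

lemma rψ_pos {V : Type} {q : ℕ} {x τ : ℝ} (hx : 0 < x) (h0 : 0 ≤ τ) (h1 : τ < 1)
    (e : (V × V) ⊕ (V × Bool)) (σ : V → Fin q) : 0 < rψ V q x τ e σ := by
  rcases e with e | e
  · exact gψ_pos hx _ _
  · exact sψ_pos h0 h1 _ _

lemma rs_left (V : Type) [Fintype V] [DecidableEq V] (q : ℕ) (x τ c : ℝ)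
    (l' : (V × V) ⊕ (V × Bool) → ℝ≥0)
    (hl : ∀ e, l' (Sum.inl e) = Real.toNNReal (c / (2 * Fintype.card V)))
    (hr : ∀ e, l' (Sum.inr e) = 0) :
    ∫ J, Ff (rψ V q x τ) J ∂(Pm l') = Phi V q x c := by
  have h1 := Pm_integral_comp l' Sum.inl Sum.inl_injective (Ff (gψ V q x))
  have h2 : l' ∘ Sum.inl = fun _ => Real.toNNReal (c / (2 * Fintype.card V)) := funext hl
  rw [h2] at h1
  refine Eq.trans ?_ h1
  refine integral_congr_ae ?_
  have z1 : ∀ᵐ J ∂(Pm l'), ∀ p : V × Bool, J (Sum.inr p) = 0 :=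
    ae_all_iff.2 fun p => Pm_ae_zero l' _ (hr p)
  filter_upwards [z1] with J hz
  unfold Ff Zf
  congr 1
  refine Finset.sum_congr rfl fun σ _ => ?_
  rw [Fintype.prod_sum_type]
  simp [hz, rψ]

lemma rs_right (V : Type) [Fintype V] [DecidableEq V] (q : ℕ) (hq : 2 ≤ q) (x τ c : ℝ)
    (h0 : 0 ≤ τ) (h1 : τ < 1)
    (l : (V × V) ⊕ (V × Bool) → ℝ≥0)
    (hl : ∀ e, l (Sum.inl e) = 0)
    (hr : ∀ e, l (Sum.inr e) = Real.toNNReal (c / 2)) :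
    ∫ J, Ff (rψ V q x τ) J ∂(Pm l) =
      Fintype.card V * ∫ J, Ff (sψ q τ) J ∂(Pm fun _ : Bool => Real.toNNReal (c / 2)) := by
  have : NeZero q := ⟨by omega⟩
  have hinj : ∀ i : V, Function.Injective (fun b : Bool => (Sum.inr (i, b) : (V × V) ⊕ (V × Bool))) :=
    fun i a b h => by simpa using h
  have hs := sψ_pos (q := q) h0 h1
  have e1 : ∀ i : V, ∫ J, Ff (sψ q τ) (J ∘ fun b : Bool => (Sum.inr (i, b) : (V × V) ⊕ (V × Bool))) ∂(Pm l)
      = ∫ J, Ff (sψ q τ) J ∂(Pm fun _ : Bool => Real.toNNReal (c / 2)) := by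
    intro i
    rw [Pm_integral_comp l _ (hinj i)]
    congr 2
    funext b
    exact hr _
  have i1 : ∀ i : V, Integrable (fun J => Ff (sψ q τ) (J ∘ fun b : Bool => (Sum.inr (i, b) : (V × V) ⊕ (V × Bool)))) (Pm l) := by
    intro i
    have := (Ff_growth hs).integrable (l ∘ fun b : Bool => (Sum.inr (i, b) : (V × V) ⊕ (V × Bool)))
    rw [← Pm_map l _ (hinj i)] at this
    exact this.comp_measurable Measurable.of_discrete
  have e2 : ∑ i : V, ∫ J, Ff (sψ q τ) (J ∘ fun b : Bool => (Sum.inr (i, b) : (V × V) ⊕ (V × Bool))) ∂(Pm l)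
      = Fintype.card V * ∫ J, Ff (sψ q τ) J ∂(Pm fun _ : Bool => Real.toNNReal (c / 2)) := by
    simp_rw [e1]; simp
  rw [← e2, ← integral_finsetSum _ (fun i _ => i1 i)]
  refine integral_congr_ae ?_
  have z1 : ∀ᵐ J ∂(Pm l), ∀ p : V × V, J (Sum.inl p) = 0 :=
    ae_all_iff.2 fun p => Pm_ae_zero l _ (hl p)
  filter_upwards [z1] with J hz
  unfold Ff
  rw [← Real.log_prod (fun i _ => (Zf_pos hs _).ne')]
  congr 1
  unfold Zf
  rw [Finset.prod_univ_sum, Fintype.piFinset_univ]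
  refine Finset.sum_congr rfl fun σ _ => ?_
  rw [Fintype.prod_sum_type, Fintype.prod_prod_type (f := fun p : V × Bool => _)]
  simp [hz, rψ]

lemma rs_bound (V : Type) [Fintype V] [DecidableEq V] [Nonempty V] (q : ℕ) (hq : 2 ≤ q) (x c ε κ : ℝ)
    (hx0 : 0 < x) (hx1 : x < 1) (hc : 0 < c) (hε0 : 0 < ε) (hε1 : ε ≤ 1)
    (hκ : κ = (1 - x) / (q - (1 - x))) :
    Phi V q x c ≤ Fintype.card V *
      (∫ J, Ff (sψ q (κ * ε)) J ∂(Pm fun _ : Bool => Real.toNNReal (c / 2))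
        + (c / 2 * Real.log (1 - (1 - x) / q) - c / 4 * Real.log (1 - (2 * κ * ε ^ 2 / q) ^ 2))) := by
  have : NeZero q := ⟨by omega⟩
  have hq2 : (2 : ℝ) ≤ q := by exact_mod_cast hq
  have hq0 : (0 : ℝ) < q := by linarith
  have hd : 0 < (q : ℝ) - (1 - x) := by linarith
  have hκ0 : 0 < κ := by rw [hκ]; exact div_pos (by linarith) hd
  have hκ1 : κ < 1 := by rw [hκ, div_lt_one hd]; linarith
  have hτ0 : 0 < κ * ε := mul_pos hκ0 hε0
  have hτ1 : κ * ε < 1 := by nlinarith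
  have hpos := rψ_pos (V := V) (q := q) hx0 hτ0.le hτ1
  set n : ℝ := ((Fintype.card V : ℕ) : ℝ) with hn
  have hn0 : 0 < n := by rw [hn]; exact_mod_cast Fintype.card_pos
  let l' : (V × V) ⊕ (V × Bool) → ℝ≥0 := Sum.elim (fun _ => Real.toNNReal (c / (2 * n))) (fun _ => 0)
  let l : (V × V) ⊕ (V × Bool) → ℝ≥0 := Sum.elim (fun _ => 0) (fun _ => Real.toNNReal (c / 2))
  rw [mul_add, ← rs_left V q x (κ * ε) c l' (fun _ => rfl) (fun _ => rfl),
    ← rs_right V q hq x (κ * ε) c hτ0.le hτ1 l (fun _ => rfl) (fun _ => rfl)]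
  refine compare_model hpos l l' _ ?_
  intro w hw0 hw1
  have c1 : ((Real.toNNReal (c / (2 * n)) : ℝ≥0) : ℝ) = c / (2 * n) :=
    Real.coe_toNNReal _ (by positivity)
  have c2 : ((Real.toNNReal (c / 2) : ℝ≥0) : ℝ) = c / 2 :=
    Real.coe_toNNReal _ (by positivity)
  set A0 : ℝ := 1 - (1 - x) / q with hA0
  have hA : 0 < A0 := by
    rw [hA0, sub_pos, div_lt_one hq0]; linarith
  set u : ℝ := 2 * κ * ε ^ 2 / q with hu
  have hu0 : 0 < u := by positivity
  have hu1 : u < 1 := by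
    rw [hu, div_lt_one hq0]
    have : ε ^ 2 ≤ 1 := by nlinarith
    nlinarith
  let ρ : (V → Fin q) × Fin q → ℝ := fun p => (1 - x) * w p.1
  let U : V ⊕ Bool → (V → Fin q) × Fin q → ℝ :=
    Sum.elim (fun i p => if p.1 i = p.2 then 1 else 0) (fun b p => (1 + ε * (sg b * gg p.2)) / q)
  let t : V ⊕ Bool → V ⊕ Bool → ℝ := fun a b => ∑ p, ρ p * U a p * U b p
  let θ : V ⊕ Bool → ℝ := Sum.elim (fun _ => 1) (fun _ => - (n / 2))
  have hρ : ∀ p, 0 ≤ ρ p := fun p => mul_nonneg (by linarith) (hw0 _).le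
  have hU : ∀ a p, 0 ≤ U a p := by
    rintro (i | b) p
    · simp only [U, Sum.elim_inl]; split_ifs <;> norm_num
    · simp only [U, Sum.elim_inr]
      have := abs_le.1 (sgg_abs b p.2)
      exact div_nonneg (by nlinarith [this.1]) hq0.le
  have tsymm : ∀ a b, t a b = t b a := fun a b => Finset.sum_congr rfl fun p _ => by ring
  have F1 : ∀ i j, 1 - t (Sum.inl i) (Sum.inl j) = ∑ σ, w σ * gψ V q x (i, j) σ :=
    fun i j => (kernel_sum q x w hw1 i j).symm
  have F2 : ∀ i b, 1 - t (Sum.inl i) (Sum.inr b) = A0 * ∑ σ, w σ * sψ q (κ * ε) b (σ i) := by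
    intro i b
    have h : t (Sum.inl i) (Sum.inr b) = ∑ σ, (1 - x) * w σ * ((1 + ε * (sg b * gg (σ i))) / q) := by
      simp only [t, ρ, U, Sum.elim_inl, Sum.elim_inr]
      rw [Fintype.sum_prod_type]
      refine Finset.sum_congr rfl fun σ _ => ?_
      rw [Finset.sum_eq_single (σ i)]
      · simp
      · intro b _ hb; simp [Ne.symm hb]
      · simp
    rw [h, sub_eq_iff_eq_add, Finset.mul_sum, ← Finset.sum_add_distrib]
    refine hw1.symm.trans (Finset.sum_congr rfl fun σ _ => ?_)
    rw [sψ, hA0, hκ]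
    field_simp
    ring
  have F3 : ∀ b b', 1 - t (Sum.inr b) (Sum.inr b') = A0 * (1 - sg b * sg b' * u) := by
    intro b b'
    have h : t (Sum.inr b) (Sum.inr b') = ∑ σ, w σ *
        ((1 - x) / q ^ 2 * ∑ s : Fin q, (1 + ε * (sg b * gg s)) * (1 + ε * (sg b' * gg s))) := by
      simp only [t, ρ, U, Sum.elim_inr]
      rw [Fintype.sum_prod_type]
      refine Finset.sum_congr rfl fun σ _ => ?_
      rw [Finset.mul_sum, Finset.mul_sum]
      refine Finset.sum_congr rfl fun s _ => ?_
      field_simp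
    rw [h, ← Finset.sum_mul, hw1, gg_sum q hq (fun g => (1 + ε * (sg b * g)) * (1 + ε * (sg b' * g))),
      hA0, hu, hκ]
    field_simp
    ring
  have sgsg : ∀ b b', |sg b * sg b'| ≤ 1 := fun b b' => by rw [abs_mul, sg_abs, sg_abs]; norm_num
  have ht1 : ∀ a b, t a b < 1 := by
    have p2 : ∀ i b, t (Sum.inl i) (Sum.inr b) < 1 := by
      intro i b
      rw [← sub_pos, F2]
      exact mul_pos hA (Finset.sum_pos (fun σ _ => mul_pos (hw0 σ) (sψ_pos hτ0.le hτ1 _ _)) Finset.univ_nonempty)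
    rintro (i | b) (j | b')
    · rw [← sub_pos, F1]
      exact Finset.sum_pos (fun σ _ => mul_pos (hw0 σ) (gψ_pos hx0 _ _)) Finset.univ_nonempty
    · exact p2 _ _
    · rw [tsymm]; exact p2 _ _
    · rw [← sub_pos, F3]
      have := abs_le.1 (sgsg b b')
      exact mul_pos hA (by nlinarith [this.2])
  have hpsd := psd_log ρ hρ U θ t (fun _ _ => rfl)
    (fun a b => Finset.sum_nonneg fun p _ => mul_nonneg (mul_nonneg (hρ p) (hU a p)) (hU b p)) ht1
  set K1 : ℝ := ∑ i : V, ∑ j : V, Real.log (∑ σ, w σ * gψ V q x (i, j) σ) with hK1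
  set K2 : ℝ := ∑ i : V, ∑ b : Bool, Real.log (∑ σ, w σ * sψ q (κ * ε) b (σ i)) with hK2
  have L2 : ∀ i b, Real.log (1 - t (Sum.inl i) (Sum.inr b)) = Real.log A0 + Real.log (∑ σ, w σ * sψ q (κ * ε) b (σ i)) := by
    intro i b
    rw [F2, Real.log_mul hA.ne']
    exact (Finset.sum_pos (fun σ _ => mul_pos (hw0 σ) (sψ_pos hτ0.le hτ1 _ _)) Finset.univ_nonempty).ne'
  have L2' : ∀ i b, Real.log (1 - t (Sum.inr b) (Sum.inl i)) = Real.log A0 + Real.log (∑ σ, w σ * sψ q (κ * ε) b (σ i)) := by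
    intro i b; rw [tsymm, L2]
  have L3 : ∑ b, ∑ b', Real.log (1 - t (Sum.inr b) (Sum.inr b')) = 4 * Real.log A0 + 2 * Real.log (1 - u ^ 2) := by
    simp_rw [F3]
    have e1 : Real.log (A0 * (1 - u)) = Real.log A0 + Real.log (1 - u) := Real.log_mul hA.ne' (by linarith)
    have e2 : Real.log (A0 * (1 + u)) = Real.log A0 + Real.log (1 + u) := Real.log_mul hA.ne' (by linarith)
    have e3 : Real.log (1 - u ^ 2) = Real.log (1 - u) + Real.log (1 + u) := by
      rw [← Real.log_mul (by linarith) (by linarith)]; ring_nf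
    simp only [Fintype.sum_bool, sg]
    norm_num
    rw [e1, e2, e3]; ring
  have S1 : ∑ a, ∑ b, θ a * θ b * Real.log (1 - t a b) =
      K1 - n * (2 * n * Real.log A0 + K2) + n ^ 2 / 4 * (4 * Real.log A0 + 2 * Real.log (1 - u ^ 2)) := by
    rw [Fintype.sum_sum_type]
    simp_rw [Fintype.sum_sum_type]
    simp only [θ, Sum.elim_inl, Sum.elim_inr, Finset.sum_add_distrib, ← Finset.mul_sum, L3, L2, L2', F1]
    have hK2' : ∑ b : Bool, ∑ i : V, Real.log (∑ σ, w σ * sψ q (κ * ε) b (σ i)) = K2 := by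
      rw [hK2, Finset.sum_comm]
    simp only [← hK1, ← hK2, hK2', Finset.sum_const, Finset.card_univ, Fintype.card_bool, nsmul_eq_mul, ← hn]
    push_cast
    ring
  rw [S1] at hpsd
  rw [Fintype.sum_sum_type]
  simp only [l, l', Sum.elim_inl, Sum.elim_inr, c1, c2, rψ, ← Finset.mul_sum]
  rw [Fintype.sum_prod_type, Fintype.sum_prod_type]
  simp only [← hK1, ← hK2, NNReal.coe_zero]
  have : 0 ≤ c / (2 * n) := by positivity
  have h := mul_le_mul_of_nonneg_left hpsd this
  rw [mul_zero] at h
  have e : c / (2 * n) * (K1 - n * (2 * n * Real.log A0 + K2) + n ^ 2 / 4 * (4 * Real.log A0 + 2 * Real.log (1 - u ^ 2)))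
    = (c / (2 * n) - 0) * K1 + (0 - c / 2) * K2 - n * (c / 2 * Real.log A0 - c / 4 * Real.log (1 - u ^ 2)) := by
    field_simp
    ring
  rw [e] at h
  linarith

end rs

section analysis
open scoped NNReal
set_option linter.unusedSectionVars false

lemma poisson_pgf_hasSum (r a : ℝ) :
    HasSum (fun n : ℕ => Real.exp (-r) * r ^ n / (Nat.factorial n) * a ^ n) (Real.exp (r * (a - 1))) := by
  have h := (NormedSpace.expSeries_div_hasSum_exp (r * a : ℝ)).mul_left (Real.exp (-r))
  rw [← Real.exp_eq_exp_ℝ, ← Real.exp_add, show -r + r * a = r * (a - 1) by ring] at h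
  refine h.congr_aux fun n => ?_
  rw [mul_pow]; ring

def HI {Ω : Type} [MeasurableSpace Ω] (μ : Measure Ω) (f : Ω → ℝ) (r : ℝ) : Prop :=
  Integrable f μ ∧ ∫ x, f x ∂μ = r

lemma HI.add {Ω : Type} [MeasurableSpace Ω] {μ : Measure Ω} {f g : Ω → ℝ} {r s : ℝ}
    (hf : HI μ f r) (hg : HI μ g s) : HI μ (fun x => f x + g x) (r + s) :=
  ⟨hf.1.add hg.1, by rw [integral_add hf.1 hg.1, hf.2, hg.2]⟩

lemma HI.cmul {Ω : Type} [MeasurableSpace Ω] {μ : Measure Ω} {f : Ω → ℝ} {r : ℝ}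
    (hf : HI μ f r) (c : ℝ) : HI μ (fun x => c * f x) (c * r) :=
  ⟨hf.1.const_mul c, by rw [integral_const_mul, hf.2]⟩

lemma HI.const {Ω : Type} [MeasurableSpace Ω] (μ : Measure Ω) [IsProbabilityMeasure μ] (c : ℝ) :
    HI μ (fun _ => c) c :=
  ⟨integrable_const c, by simp⟩

lemma HI.congr {Ω : Type} [MeasurableSpace Ω] {μ : Measure Ω} {f g : Ω → ℝ} {r s : ℝ}
    (hf : HI μ f r) (h : ∀ x, g x = f x) (hrs : s = r) : HI μ g s := by
  rw [show g = f from funext h, hrs]; exact hf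

lemma poisson_pgf (r : ℝ≥0) (a : ℝ) (ha : 0 ≤ a) :
    HI (ProbabilityTheory.poissonMeasure r) (fun n => a ^ n) (Real.exp (r * (a - 1))) := by
  have h := poisson_pgf_hasSum r a
  refine ⟨?_, ?_⟩
  · rw [ProbabilityTheory.integrable_poissonMeasure_iff]
    refine h.summable.congr fun n => ?_
    rw [Real.norm_of_nonneg (by positivity)]
  · rw [ProbabilityTheory.integral_poissonMeasure]
    exact h.tsum_eq

lemma bool_pgf (r : ℝ≥0) (a b : ℝ) (ha : 0 ≤ a) (hb : 0 ≤ b) :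
    HI (Pm fun _ : Bool => r) (fun J => a ^ J true * b ^ J false) (Real.exp (r * (a + b - 2))) := by
  let f : Bool → ℕ → ℝ := fun i n => (if i then a else b) ^ n
  have hab : ∀ i : Bool, 0 ≤ (if i then a else b) := by intro i; cases i <;> simpa
  have h1 : Integrable (fun J : Bool → ℕ => ∏ i, f i (J i)) (Pm fun _ : Bool => r) :=
    Integrable.fintype_prod (fun i => (poisson_pgf r _ (hab i)).1)
  have h2 : ∫ J : Bool → ℕ, ∏ i, f i (J i) ∂(Pm fun _ : Bool => r) =
      ∏ i, ∫ n, f i n ∂(ProbabilityTheory.poissonMeasure r) :=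
    integral_fintype_prod_eq_prod f
  have h3 : ∀ i, ∫ n, f i n ∂(ProbabilityTheory.poissonMeasure r) = Real.exp (r * ((if i then a else b) - 1)) :=
    fun i => (poisson_pgf r _ (hab i)).2
  simp only [h3, Fintype.prod_bool, ← Real.exp_add] at h1 h2
  refine HI.congr ⟨h1, h2⟩ (fun J => by simp [f]) ?_
  congr 1; simp; ring

lemma log_bound3 (v : ℝ) (hv : -1 < v) : Real.log (1 + v) ≤ v - v ^ 2 / 2 + v ^ 3 / 3 := by
  let φ : ℝ → ℝ := fun v => v - v ^ 2 / 2 + v ^ 3 / 3 - Real.log (1 + v)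
  have hd : ∀ v, -1 < v → HasDerivAt φ (v ^ 3 / (1 + v)) v := by
    intro v hv
    have h1 : HasDerivAt (fun v : ℝ => 1 + v) 1 v := (hasDerivAt_id v).const_add 1
    have h2 := h1.log (by linarith)
    have h3 := (((hasDerivAt_id v).sub ((hasDerivAt_pow 2 v).div_const 2)).add ((hasDerivAt_pow 3 v).div_const 3)).sub h2
    refine h3.congr_deriv ?_
    have : 1 + v ≠ 0 := by linarith
    simp
    field_simp
    ring
  have φ0 : φ 0 = 0 := by simp [φ]
  suffices h : 0 ≤ φ v by simp only [φ] at h; linarith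
  rcases le_total 0 v with h | h
  · have hm : MonotoneOn φ (Set.Ici 0) := by
      refine monotoneOn_of_deriv_nonneg (convex_Ici 0)
        (fun w hw => (hd w (by have := Set.mem_Ici.1 hw; linarith)).continuousAt.continuousWithinAt) ?_ ?_
      · intro w hw
        rw [interior_Ici] at hw
        exact (hd w (by have := Set.mem_Ioi.1 hw; linarith)).differentiableAt.differentiableWithinAt
      · intro w hw
        rw [interior_Ici] at hw
        have hw0 := Set.mem_Ioi.1 hw
        rw [(hd w (by linarith)).deriv]
        positivity
    rw [← φ0]
    exact hm (Set.mem_Ici.2 le_rfl) (Set.mem_Ici.2 h) h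
  · have hm : AntitoneOn φ (Set.Ioc (-1) 0) := by
      refine antitoneOn_of_deriv_nonpos (convex_Ioc _ _)
        (fun w hw => (hd w hw.1).continuousAt.continuousWithinAt) ?_ ?_
      · intro w hw
        rw [interior_Ioc] at hw
        exact (hd w hw.1).differentiableAt.differentiableWithinAt
      · intro w hw
        rw [interior_Ioc] at hw
        rw [(hd w hw.1).deriv]
        refine div_nonpos_of_nonpos_of_nonneg ?_ (by linarith [hw.1])
        have : w ^ 3 = w * w ^ 2 := by ring
        rw [this]
        exact mul_nonpos_of_nonpos_of_nonneg hw.2.le (sq_nonneg w)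
    rw [← φ0]
    exact hm ⟨hv, h⟩ ⟨by norm_num, le_rfl⟩ h

lemma site_bound (q : ℕ) (hq : 2 ≤ q) (τ c z : ℝ) (hτ0 : 0 < τ) (hτ1 : τ < 1) (hc : 0 < c)
    (hz : z = c * τ ^ 2) :
    ∫ J, Ff (sψ q τ) J ∂(Pm fun _ : Bool => Real.toNNReal (c / 2)) ≤
      Real.log q - (2 * Real.exp z + 2 * Real.exp (-z) - 4) / (2 * q ^ 2)
        + (2 * Real.exp (3 * z) - 12 * Real.exp z - 6 * Real.exp (-z) + 16) / (3 * q ^ 3) := by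
  have : NeZero q := ⟨by omega⟩
  have hq2 : (2 : ℝ) ≤ q := by exact_mod_cast hq
  have hq0 : (0 : ℝ) < q := by linarith
  set μ := (Pm fun _ : Bool => Real.toNNReal (c / 2)) with hμ
  set a : ℝ := 1 - τ with ha
  set b : ℝ := 1 + τ with hb
  have ha0 : 0 < a := by linarith
  have hb0 : 0 < b := by linarith
  let P1 : (Bool → ℕ) → ℝ := fun J => a ^ J true * b ^ J false
  let P2 : (Bool → ℕ) → ℝ := fun J => b ^ J true * a ^ J false
  have M : ∀ i j : ℕ, HI μ (fun J => P1 J ^ i * P2 J ^ j) (Real.exp (c / 2 * (a ^ i * b ^ j + b ^ i * a ^ j - 2))) := by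
    intro i j
    have h := bool_pgf (Real.toNNReal (c / 2)) (a ^ i * b ^ j) (b ^ i * a ^ j) (by positivity) (by positivity)
    rw [Real.coe_toNNReal _ (by positivity)] at h
    refine h.congr (fun J => ?_) rfl
    simp only [P1, P2, mul_pow, ← pow_mul]
    ring
  have hD1 : HI μ (fun J => P1 J + P2 J - 2) 0 := by
    refine (((M 1 0).add (M 0 1)).add (HI.const μ (-2))).congr (fun J => by ring) ?_
    have : c / 2 * (a ^ 1 * b ^ 0 + b ^ 1 * a ^ 0 - 2) = 0 := by rw [ha, hb]; ring
    have h' : c / 2 * (a ^ 0 * b ^ 1 + b ^ 0 * a ^ 1 - 2) = 0 := by rw [ha, hb]; ring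
    rw [this, h']; norm_num
  have m10 : Real.exp (c / 2 * (a ^ 1 * b ^ 0 + b ^ 1 * a ^ 0 - 2)) = 1 := by
    rw [Real.exp_eq_one_iff, ha, hb]; ring
  have m01 : Real.exp (c / 2 * (a ^ 0 * b ^ 1 + b ^ 0 * a ^ 1 - 2)) = 1 := by
    rw [Real.exp_eq_one_iff, ha, hb]; ring
  have m20 : Real.exp (c / 2 * (a ^ 2 * b ^ 0 + b ^ 2 * a ^ 0 - 2)) = Real.exp z := by
    rw [Real.exp_eq_exp, ha, hb, hz]; ring
  have m02 : Real.exp (c / 2 * (a ^ 0 * b ^ 2 + b ^ 0 * a ^ 2 - 2)) = Real.exp z := by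
    rw [Real.exp_eq_exp, ha, hb, hz]; ring
  have m11 : Real.exp (c / 2 * (a ^ 1 * b ^ 1 + b ^ 1 * a ^ 1 - 2)) = Real.exp (-z) := by
    rw [Real.exp_eq_exp, ha, hb, hz]; ring
  have m30 : Real.exp (c / 2 * (a ^ 3 * b ^ 0 + b ^ 3 * a ^ 0 - 2)) = Real.exp (3 * z) := by
    rw [Real.exp_eq_exp, ha, hb, hz]; ring
  have m03 : Real.exp (c / 2 * (a ^ 0 * b ^ 3 + b ^ 0 * a ^ 3 - 2)) = Real.exp (3 * z) := by
    rw [Real.exp_eq_exp, ha, hb, hz]; ring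
  have m21 : Real.exp (c / 2 * (a ^ 2 * b ^ 1 + b ^ 2 * a ^ 1 - 2)) = Real.exp (-z) := by
    rw [Real.exp_eq_exp, ha, hb, hz]; ring
  have m12 : Real.exp (c / 2 * (a ^ 1 * b ^ 2 + b ^ 1 * a ^ 2 - 2)) = Real.exp (-z) := by
    rw [Real.exp_eq_exp, ha, hb, hz]; ring
  have hD2 : HI μ (fun J => (P1 J + P2 J - 2) ^ 2) (2 * Real.exp z + 2 * Real.exp (-z) - 4) := by
    refine ((((M 2 0).add (M 0 2)).add ((M 1 1).cmul 2)).add ((hD1.cmul (-4)).add (HI.const μ (-4)))).congr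
      (fun J => by ring) ?_
    rw [m20, m02, m11]; ring
  have hD3 : HI μ (fun J => (P1 J + P2 J - 2) ^ 3)
      (2 * Real.exp (3 * z) - 12 * Real.exp z - 6 * Real.exp (-z) + 16) := by
    refine ((((M 3 0).add (M 0 3)).add (((M 2 1).add (M 1 2)).cmul 3)).add
      ((hD2.cmul (-6)).add ((hD1.cmul (-12)).add (HI.const μ (-8))))).congr (fun J => by ring) ?_
    rw [m30, m03, m21, m12]; ring
  have hT := (HI.const μ (Real.log q)).add ((hD1.cmul (1 / q)).add
    ((hD2.cmul (-1 / (2 * q ^ 2))).add (hD3.cmul (1 / (3 * q ^ 3)))))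
  have hle : ∀ J, Ff (sψ q τ) J ≤ Real.log q + (1 / q * (P1 J + P2 J - 2) +
      (-1 / (2 * q ^ 2) * (P1 J + P2 J - 2) ^ 2 + 1 / (3 * q ^ 3) * (P1 J + P2 J - 2) ^ 3)) := by
    intro J
    have hZ : Zf (sψ q τ) J = P1 J + P2 J + ((q : ℝ) - 2) := by
      unfold Zf sψ
      rw [gg_sum q hq (fun g => ∏ e, (1 - τ * (sg e * g)) ^ J e)]
      simp only [Fintype.prod_bool, sg, P1, P2]
      simp
      rfl
    have hP1 : 0 < P1 J := by positivity
    have hP2 : 0 < P2 J := by positivity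
    set D := P1 J + P2 J - 2 with hD
    have hv : -1 < D / q := by
      rw [lt_div_iff₀ hq0]; linarith
    have hZ' : Zf (sψ q τ) J = q * (1 + D / q) := by
      rw [hZ, hD]; field_simp; ring
    unfold Ff
    rw [hZ', Real.log_mul hq0.ne' (by linarith)]
    have := log_bound3 _ hv
    have e : D / q - (D / q) ^ 2 / 2 + (D / q) ^ 3 / 3 = 1 / q * D +
      (-1 / (2 * q ^ 2) * D ^ 2 + 1 / (3 * q ^ 3) * D ^ 3) := by
      field_simp
      ring
    linarith
  have hint := (Ff_growth (sψ_pos (q := q) hτ0.le hτ1)).integrable (fun _ : Bool => Real.toNNReal (c / 2))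
  have h := integral_mono hint hT.1 hle
  rw [hT.2] at h
  refine h.trans (le_of_eq ?_)
  field_simp
  ring

lemma exp3 (x : ℝ) (hx : |x| ≤ 1) : |Real.exp x - (1 + x + x ^ 2 / 2)| ≤ 2 / 9 * |x| ^ 3 := by
  have h := Real.exp_bound hx (n := 3) (by norm_num)
  simp only [Finset.sum_range_succ, Finset.sum_range_zero] at h
  norm_num [Nat.factorial] at h
  linarith

lemma moment2 (z : ℝ) (hz : 0 ≤ z) : 2 * z ^ 2 ≤ 2 * Real.exp z + 2 * Real.exp (-z) - 4 := by
  have h := Real.self_le_sinh_iff.2 (show 0 ≤ z / 2 by linarith)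
  rw [Real.sinh_eq] at h
  have e1 : Real.exp z = Real.exp (z / 2) ^ 2 := by rw [← Real.exp_nat_mul]; congr 1; push_cast; ring
  have e2 : Real.exp (-z) = Real.exp (-(z / 2)) ^ 2 := by rw [← Real.exp_nat_mul]; congr 1; push_cast; ring
  have e3 : Real.exp (z / 2) * Real.exp (-(z / 2)) = 1 := by rw [← Real.exp_add]; simp
  rw [e1, e2]
  nlinarith

lemma moment3 (z : ℝ) (hz : 0 ≤ z) (hz1 : z ≤ 1 / 3) :
    2 * Real.exp (3 * z) - 12 * Real.exp z - 6 * Real.exp (-z) + 16 ≤ 16 * z ^ 3 := by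
  have h1 := exp3 (3 * z) (by rw [abs_of_nonneg (by linarith)]; linarith)
  have h2 := exp3 z (by rw [abs_of_nonneg (by linarith)]; linarith)
  have h3 := exp3 (-z) (by rw [abs_neg, abs_of_nonneg (by linarith)]; linarith)
  rw [abs_of_nonneg (show 0 ≤ 3 * z by linarith)] at h1
  rw [abs_of_nonneg hz] at h2
  rw [abs_neg, abs_of_nonneg hz] at h3
  have := (abs_le.1 h1).2
  have := (abs_le.1 h2).1
  have := (abs_le.1 h3).1
  nlinarith

lemma rs_exists (q : ℕ) (hq : 2 ≤ q) (x c κ : ℝ) (hc : 0 < c)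
    (hκ0 : 0 < κ) (hκ1 : κ < 1) (hKS : 1 < c * κ ^ 2) :
    ∃ ε, 0 < ε ∧ ε ≤ 1 ∧
     (∫ J, Ff (sψ q (κ * ε)) J ∂(Pm fun _ : Bool => Real.toNNReal (c / 2))
        + (c / 2 * Real.log (1 - (1 - x) / q) - c / 4 * Real.log (1 - (2 * κ * ε ^ 2 / q) ^ 2)))
      < Real.log q + c / 2 * Real.log (1 - (1 - x) / q) := by
  have hq2 : (2 : ℝ) ≤ q := by exact_mod_cast hq
  have hq0 : (0 : ℝ) < q := by linarith
  have hη : 1 / (c * κ ^ 2) < 1 := by rw [div_lt_one (by positivity)]; exact hKS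
  have hev : ∀ᶠ ε in nhds (0 : ℝ), -1 + 16 * (c * (κ * ε) ^ 2) / (3 * q)
      + 1 / (c * κ ^ 2) * (1 - (2 * κ * ε ^ 2 / q) ^ 2)⁻¹ < 0 := by
    have hcont : ContinuousAt (fun ε : ℝ => -1 + 16 * (c * (κ * ε) ^ 2) / (3 * q)
      + 1 / (c * κ ^ 2) * (1 - (2 * κ * ε ^ 2 / q) ^ 2)⁻¹) 0 := by
      refine ContinuousAt.add (by fun_prop) (ContinuousAt.mul (by fun_prop) (ContinuousAt.inv₀ (by fun_prop) ?_))
      simp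
    refine hcont.eventually_lt continuousAt_const ?_
    simp at hη ⊢
    linarith
  have hev2 : ∀ᶠ ε in nhds (0 : ℝ), c * (κ * ε) ^ 2 < 1 / 3 := by
    have hcont : ContinuousAt (fun ε : ℝ => c * (κ * ε) ^ 2) 0 := by fun_prop
    exact hcont.eventually_lt continuousAt_const (by norm_num)
  have hev3 : ∀ᶠ ε in nhds (0 : ℝ), ε < 1 := eventually_lt_nhds one_pos
  obtain ⟨ε, ⟨h1, h2, h3⟩, hε0⟩ := (((hev.and (hev2.and hev3)).filter_mono nhdsWithin_le_nhds).and
    (self_mem_nhdsWithin : Set.Ioi (0 : ℝ) ∈ nhdsWithin 0 (Set.Ioi 0))).exists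
  have hε0 : 0 < ε := hε0
  refine ⟨ε, hε0, h3.le, ?_⟩
  have hτ0 : 0 < κ * ε := by positivity
  have hτ1 : κ * ε < 1 := by nlinarith
  set z := c * (κ * ε) ^ 2 with hz
  have hz0 : 0 < z := by positivity
  have hs := site_bound q hq (κ * ε) c z hτ0 hτ1 hc hz
  have hm2 := moment2 z hz0.le
  have hm3 := moment3 z hz0.le h2.le
  set w := (2 * κ * ε ^ 2 / q) ^ 2 with hw
  have hw1 : w < 1 := by
    have hu0 : 0 < 2 * κ * ε ^ 2 / q := by positivity
    have hu1 : 2 * κ * ε ^ 2 / q < 1 := by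
      rw [div_lt_one hq0]
      have : ε ^ 2 ≤ 1 := by nlinarith
      nlinarith
    rw [hw]; nlinarith
  have hlog := Real.one_sub_inv_le_log_of_pos (show 0 < 1 - w by linarith)
  have a1 : 2 * z ^ 2 / (2 * q ^ 2) ≤ (2 * Real.exp z + 2 * Real.exp (-z) - 4) / (2 * (q : ℝ) ^ 2) := by gcongr
  have a2 : (2 * Real.exp (3 * z) - 12 * Real.exp z - 6 * Real.exp (-z) + 16) / (3 * (q : ℝ) ^ 3)
    ≤ 16 * z ^ 3 / (3 * q ^ 3) := by gcongr
  have a3 : - (c / 4 * Real.log (1 - w)) ≤ c / 4 * w * (1 - w)⁻¹ := by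
    have e : w * (1 - w)⁻¹ = (1 - w)⁻¹ - 1 := by
      have : 1 - w ≠ 0 := by linarith
      field_simp; ring
    rw [mul_assoc, e]
    nlinarith
  have a4 : c / 4 * w = z ^ 2 / q ^ 2 * (1 / (c * κ ^ 2)) := by
    rw [hw, hz]; field_simp; ring
  have a5 : z ^ 2 / q ^ 2 * (-1 + 16 * z / (3 * q) + 1 / (c * κ ^ 2) * (1 - w)⁻¹) < 0 :=
    mul_neg_of_pos_of_neg (by positivity) h1
  have a6 : z ^ 2 / q ^ 2 * (-1 + 16 * z / (3 * q) + 1 / (c * κ ^ 2) * (1 - w)⁻¹) =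
    - (2 * z ^ 2 / (2 * q ^ 2)) + 16 * z ^ 3 / (3 * q ^ 3) + c / 4 * w * (1 - w)⁻¹ := by
    rw [a4]; field_simp
  linarith

end analysis
/-- for `c > (q-1)²` and `β > -ln(1 - q/(1+√c))`, the limiting
quenched pressure is strictly below the annealed pressure. -/
theorem statement9 (q : ℕ) (hq : 2 ≤ q) (β c : ℝ)
    (hc : ((q : ℝ) - 1) ^ 2 < c)
    (hβ : -Real.log (1 - (q : ℝ) / (1 + Real.sqrt c)) < β) :
    ∃ P : ℝ, Filter.Tendsto (fun N => potts.p q N β c) Filter.atTop (nhds P) ∧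
      P < potts.annealed q β c := by
  have hq2 : (2 : ℝ) ≤ q := by exact_mod_cast hq
  have hq0 : (0 : ℝ) < q := by linarith
  have hc0 : 0 < c := lt_of_le_of_lt (sq_nonneg _) hc
  have hsq : (q : ℝ) - 1 < Real.sqrt c := Real.lt_sqrt_of_sq_lt hc
  have hs2 : Real.sqrt c ^ 2 = c := Real.sq_sqrt hc0.le
  set s := Real.sqrt c with hs
  have hT0 : 0 < 1 - (q : ℝ) / (1 + s) := by
    rw [sub_pos, div_lt_one (by linarith)]; linarith
  set x := Real.exp (-β) with hx
  have hx0 : 0 < x := Real.exp_pos _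
  have hxT : x < 1 - (q : ℝ) / (1 + s) := by
    rw [hx, ← Real.lt_log_iff_exp_lt hT0]; linarith
  have hx1 : x < 1 := by
    have : 0 < (q : ℝ) / (1 + s) := div_pos hq0 (by linarith)
    linarith
  have hd : 0 < (q : ℝ) - (1 - x) := by linarith
  obtain ⟨κ, hκ⟩ : ∃ κ, κ = (1 - x) / ((q : ℝ) - (1 - x)) := ⟨_, rfl⟩
  have hκ0 : 0 < κ := by rw [hκ]; exact div_pos (by linarith) hd
  have hκ1 : κ < 1 := by rw [hκ, div_lt_one hd]; linarith
  have hKS : 1 < c * κ ^ 2 := by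
    have h1 : (q : ℝ) / (1 + s) < 1 - x := by linarith
    rw [div_lt_iff₀ (by linarith)] at h1
    have h2 : 1 < s * κ := by
      rw [hκ, ← mul_div_assoc, lt_div_iff₀ hd]; linarith
    rw [← hs2, ← mul_pow]
    nlinarith
  obtain ⟨ε, hε0, hε1, hlt⟩ := rs_exists q hq x c κ hc0 hκ0 hκ1 hKS
  set R := (∫ J, Ff (sψ q (κ * ε)) J ∂(Pm fun _ : Bool => Real.toNNReal (c / 2))
        + (c / 2 * Real.log (1 - (1 - x) / q) - c / 4 * Real.log (1 - (2 * κ * ε ^ 2 / q) ^ 2)))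
  have hR : ∀ N : ℕ, N ≠ 0 → Phi (Fin N) q x c ≤ N * R := by
    intro N hN
    have : NeZero N := ⟨hN⟩
    have h := rs_bound (Fin N) q hq x c ε κ hx0 hx1 hc0 hε0 hε1 hκ
    rw [Fintype.card_fin] at h
    exact h
  let u : ℕ → ℝ := fun N => if N = 0 then 0 else - Phi (Fin N) q x c
  have hu : Subadditive u := by
    intro m n
    by_cases hm : m = 0
    · subst hm; simp [u]
    by_cases hn : n = 0
    · subst hn; simp [u]
    have : NeZero m := ⟨hm⟩
    have : NeZero n := ⟨hn⟩
    have h := Phi_superadd (Fin m) (Fin n) q hq x c hx0 hx1 hc0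
    rw [Phi_equiv finSumFinEquiv] at h
    have hmn : m + n ≠ 0 := by omega
    simp only [u, hm, hn, hmn, if_false]
    linarith
  have hbdd : BddBelow (Set.range fun n => u n / n) := by
    refine ⟨min 0 (-R), ?_⟩
    rintro _ ⟨N, rfl⟩
    by_cases hN : N = 0
    · subst hN; simp [u]
    · refine (min_le_right _ _).trans ?_
      have hN0 : (0 : ℝ) < N := by exact_mod_cast Nat.pos_of_ne_zero hN
      simp only [u, hN, if_false]
      rw [le_div_iff₀ hN0]
      have := hR N hN
      linarith
  have hlim := (hu.tendsto_lim hbdd).neg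
  have hpeq : ∀ N : ℕ, N ≠ 0 → potts.p q N β c = - (u N / N) := by
    intro N hN
    rw [potts_link q N hq hN β c hc0]
    simp only [u, hN, if_false]
    ring
  have hP : Filter.Tendsto (fun N => potts.p q N β c) Filter.atTop (nhds (-hu.lim)) := by
    refine hlim.congr' ?_
    filter_upwards [Filter.eventually_ne_atTop 0] with N hN
    exact (hpeq N hN).symm
  refine ⟨-hu.lim, hP, lt_of_le_of_lt ?_ hlt⟩
  refine le_of_tendsto hP ?_
  filter_upwards [Filter.eventually_ne_atTop 0] with N hN
  rw [potts_link q N hq hN β c hc0]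
  have hN0 : (0 : ℝ) < N := by exact_mod_cast Nat.pos_of_ne_zero hN
  rw [one_div, inv_mul_le_iff₀ hN0]
  exact hR N hN
end

section
/- Let β, c > 0, let x = (1−e^{−β})/(q−1+e^{−β}), and define g^(1)(β,c,q,t) = Σ_{k=0}^∞ π_c(k) Σ_{τ₁,…,τ_k ∈ [q]} q^{−k} ln( Σ_{s∈[q]} q^{−1} Π_{i=1}^k (1 − x t (q δ(τ_i,s) − 1)) ). Then as t → 0, g^(1)(β,c,q,t) = −(1/4)(q−1) c² x⁴ t⁴ + O(t⁶); that is, there exist constants C > 0 and δ₀ > 0 such that |g^(1)(β,c,q,t) + (1/4)(q−1) c² x⁴ t⁴| ≤ C t⁶ for all |t| ≤ δ₀. -/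
/-- The replica symmetric functional
`g⁽¹⁾(β,c,q,t) = Σ_k π_c(k) Σ_{τ₁,…,τ_k} q^{-k}
  ln(Σ_s q⁻¹ ∏_i (1 - x t (q δ(τ_i,s) - 1)))`, where
`x = (1-e^{-β})/(q-1+e^{-β})`. -/
noncomputable def g1 (q : ℕ) (β c t : ℝ) : ℝ :=
  ∑' k : ℕ, poissonPMF c k *
    ∑ τ : Fin k → Fin q, ((q : ℝ) ^ k)⁻¹ *
      Real.log (∑ s : Fin q, (q : ℝ)⁻¹ *
        ∏ i : Fin k,
          (1 - ((1 - Real.exp (-β)) / ((q : ℝ) - 1 + Real.exp (-β))) * t *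
            ((q : ℝ) * (if τ i = s then (1 : ℝ) else 0) - 1)))

open Finset in
lemma aux_prod (v : ℝ) (hv0 : 0 ≤ v) (hv : v ≤ 1/2) (k : ℕ) (y : Fin k → ℝ) (hy : ∀ i, |y i| ≤ v) :
    |∏ i, (1 + y i) - 1| ≤ v * (2^k - 1) ∧ |∏ i, (1 + y i) - 1 - ∑ i, y i| ≤ v^2 * 2^k ∧
    (1/2:ℝ)^k ≤ ∏ i, (1 + y i) := by
  induction k with
  | zero => simp; positivity
  | succ k ih =>
    obtain ⟨h1, h2, h3⟩ := ih (fun i => y i.castSucc) (fun i => hy _)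
    rw [Fin.prod_univ_castSucc, Fin.sum_univ_castSucc]
    set P := ∏ i : Fin k, (1 + y i.castSucc)
    set S := ∑ i : Fin k, y i.castSucc
    have hl := hy (Fin.last k)
    set z := y (Fin.last k)
    have hp : (1:ℝ) ≤ 2^k := one_le_pow₀ (by norm_num)
    have hz : |z * (P - 1)| ≤ v * (v * (2^k-1)) := by
      rw [abs_mul]; gcongr
    have hvv : v * (v * (2^k-1)) ≤ v * (2^k - 1) := by
      have : 0 ≤ v * (2^k-1) := mul_nonneg hv0 (by linarith)
      nlinarith
    refine ⟨?_, ?_, ?_⟩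
    · have e : P * (1+z) - 1 = (P - 1) + z * (P-1) + z := by ring
      rw [e, pow_succ]
      have := abs_add_three (P-1) (z*(P-1)) z
      linarith
    · have e : P * (1+z) - 1 - (S + z) = (P - 1 - S) + z * (P-1) := by ring
      rw [e, pow_succ 2 k]
      have := abs_add_le (P-1-S) (z*(P-1))
      have h4 : v * (v * (2^k-1)) = v^2 * 2^k - v^2 := by ring
      have h5 := sq_nonneg v
      linarith
    · rw [pow_succ]
      have := abs_le.1 hl
      have hh : (0:ℝ) < (1/2)^k := by positivity
      apply mul_le_mul h3 (by linarith) (by norm_num) (by linarith)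

lemma aux_log (W : ℝ) (hW : 0 < 1 + W) :
    |Real.log (1+W) - W + W^2/2| ≤ |W|^3 * (1 + (1+W)⁻¹) := by
  -- F(w) = log(1+w) - w + w^2/2 , F' = w^2/(1+w)
  have hd : ∀ (a : ℝ) (w : ℝ), 0 < 1 + w → HasDerivAt (fun w => Real.log (1+w) - w + w^2/2 - a * w^3)
      (w^2/(1+w) - 3 * a * w^2) w := by
    intro a w hw
    have h1 : HasDerivAt (fun w : ℝ => 1 + w) 1 w := by simpa using (hasDerivAt_id w).const_add 1
    have h2 := h1.log hw.ne'
    have h3 := ((h2.sub (hasDerivAt_id w)).add ((hasDerivAt_pow 2 w).div_const 2)).sub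
      ((hasDerivAt_pow 3 w).const_mul a)
    refine h3.congr_deriv ?_
    field_simp
    push_cast
    ring
  have mono : ∀ (a : ℝ) (D : Set ℝ), Convex ℝ D → (∀ w ∈ D, 0 < 1 + w) →
      (∀ w ∈ D, 0 ≤ w^2/(1+w) - 3 * a * w^2) →
      MonotoneOn (fun w => Real.log (1+w) - w + w^2/2 - a * w^3) D := by
    intro a D hD hp hn
    apply monotoneOn_of_deriv_nonneg hD
    · exact fun w hw => (hd a w (hp w hw)).continuousAt.continuousWithinAt
    · exact fun w hw => (hd a w (hp w (interior_subset hw))).differentiableAt.differentiableWithinAt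
    · intro w hw
      rw [(hd a w (hp w (interior_subset hw))).deriv]
      exact hn w (interior_subset hw)
  have anti : ∀ (a : ℝ) (D : Set ℝ), Convex ℝ D → (∀ w ∈ D, 0 < 1 + w) →
      (∀ w ∈ D, w^2/(1+w) - 3 * a * w^2 ≤ 0) →
      AntitoneOn (fun w => Real.log (1+w) - w + w^2/2 - a * w^3) D := by
    intro a D hD hp hn
    apply antitoneOn_of_deriv_nonpos hD
    · exact fun w hw => (hd a w (hp w hw)).continuousAt.continuousWithinAt
    · exact fun w hw => (hd a w (hp w (interior_subset hw))).differentiableAt.differentiableWithinAt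
    · intro w hw
      rw [(hd a w (hp w (interior_subset hw))).deriv]
      exact hn w (interior_subset hw)
  have hinv : 0 < (1+W)⁻¹ := inv_pos.2 hW
  rcases le_total 0 W with h | h
  · have m := mono 0 (Set.Icc 0 W) (convex_Icc _ _) (fun w hw => by linarith [hw.1])
      (fun w hw => by have := hw.1; simp; positivity) (Set.left_mem_Icc.2 h) (Set.right_mem_Icc.2 h) h
    have n := anti 1 (Set.Icc 0 W) (convex_Icc _ _) (fun w hw => by linarith [hw.1])
      (fun w hw => by
        have h0 := hw.1
        have : w^2/(1+w) ≤ w^2 := div_le_self (by positivity) (by linarith)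
        nlinarith [sq_nonneg w]) (Set.left_mem_Icc.2 h) (Set.right_mem_Icc.2 h) h
    simp at m n
    rw [abs_of_nonneg (by linarith), abs_of_nonneg h]
    have : 0 ≤ W^3 * (1+W)⁻¹ := by positivity
    nlinarith
  · have m := mono 0 (Set.Icc W 0) (convex_Icc _ _) (fun w hw => by linarith [hw.1])
      (fun w hw => by have : 0 < 1 + w := by linarith [hw.1]
                      simp; positivity) (Set.left_mem_Icc.2 h) (Set.right_mem_Icc.2 h) h
    have n := anti ((1+W)⁻¹) (Set.Icc W 0) (convex_Icc _ _) (fun w hw => by linarith [hw.1])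
      (fun w hw => by
        have h0 := hw.1
        have : w^2/(1+w) ≤ w^2 * (1+W)⁻¹ := by
          rw [div_eq_mul_inv]
          gcongr
        nlinarith [mul_nonneg (sq_nonneg w) hinv.le]) (Set.left_mem_Icc.2 h) (Set.right_mem_Icc.2 h) h
    simp at m n
    rw [abs_of_nonpos (by linarith), abs_of_nonpos h]
    have : 0 ≤ (-W)^3 := by have : 0 ≤ -W := by linarith
                            positivity
    nlinarith

/-- the coefficient -/
noncomputable def cA (q : ℕ) (j s : Fin q) : ℝ := (q : ℝ) * (if j = s then (1 : ℝ) else 0) - 1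

noncomputable def cZ (q : ℕ) (u : ℝ) (k : ℕ) (τ : Fin k → Fin q) : ℝ :=
  ∑ s : Fin q, (q : ℝ)⁻¹ * ∏ i : Fin k, (1 - u * cA q (τ i) s)

lemma cA_sum_left (q : ℕ) (s : Fin q) : ∑ j, cA q j s = 0 := by
  simp [cA]

lemma cA_sum_right (q : ℕ) (j : Fin q) : ∑ s, cA q j s = 0 := by
  simp [cA]

lemma cA_sum_mul (q : ℕ) (s s' : Fin q) : ∑ j, cA q j s * cA q j s' = q * cA q s s' := by
  have : ∀ j, cA q j s * cA q j s' = (q:ℝ) * (if j = s then cA q j s' else 0) - cA q j s' := by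
    intro j; unfold cA; split_ifs <;> ring
  simp only [this, Finset.sum_sub_distrib, ← Finset.mul_sum, cA_sum_left]
  simp

lemma cA_abs (q : ℕ) (hq : 2 ≤ q) (j s : Fin q) : |cA q j s| ≤ q := by
  have : (2:ℝ) ≤ q := by exact_mod_cast hq
  unfold cA; rw [abs_le]; split_ifs <;> constructor <;> linarith

lemma sum_prod_fn (q k : ℕ) (f : Fin q → ℝ) :
    ∑ τ : Fin k → Fin q, ∏ i, f (τ i) = (∑ j, f j)^k := by
  simpa using (Finset.prod_univ_sum (fun _ : Fin k => (Finset.univ : Finset (Fin q))) (fun _ j => f j)).symm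

lemma E_one (q : ℕ) (hq : 2 ≤ q) (u : ℝ) (k : ℕ) :
    ∑ τ : Fin k → Fin q, ((q:ℝ)^k)⁻¹ * cZ q u k τ = 1 := by
  have hq0 : (q:ℝ) ≠ 0 := by positivity
  unfold cZ
  rw [← Finset.mul_sum, Finset.sum_comm]
  have e : ∀ s : Fin q, ∑ τ : Fin k → Fin q, (q:ℝ)⁻¹ * ∏ i, (1 - u * cA q (τ i) s) =
      (q:ℝ)⁻¹ * q^k := by
    intro s
    rw [← Finset.mul_sum, sum_prod_fn q k (fun j => 1 - u * cA q j s), Finset.sum_sub_distrib,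
      ← Finset.mul_sum, cA_sum_left]
    simp
  simp_rw [e]
  simp
  field_simp

lemma E_two (q : ℕ) (hq : 2 ≤ q) (u : ℝ) (k : ℕ) :
    ∑ τ : Fin k → Fin q, ((q:ℝ)^k)⁻¹ * (cZ q u k τ)^2 =
      (q:ℝ)⁻¹ * (1 + u^2 * (q-1))^k + (1 - (q:ℝ)⁻¹) * (1 - u^2)^k := by
  have hq0 : (q:ℝ) ≠ 0 := by positivity
  have e : ∀ τ : Fin k → Fin q, (cZ q u k τ)^2 = ∑ s, ∑ s', ((q:ℝ)⁻¹)^2 *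
      ∏ i, ((1 - u * cA q (τ i) s) * (1 - u * cA q (τ i) s')) := by
    intro τ
    rw [sq, cZ, Finset.sum_mul_sum]
    refine Finset.sum_congr rfl fun s _ => Finset.sum_congr rfl fun s' _ => ?_
    rw [Finset.prod_mul_distrib]; ring
  have e2 : ∀ s s' : Fin q, ∑ j, ((1 - u * cA q j s) * (1 - u * cA q j s')) =
      q * (1 + u^2 * cA q s s') := by
    intro s s'
    have : ∀ j, (1 - u * cA q j s) * (1 - u * cA q j s') =
      1 - u * cA q j s - u * cA q j s' + u^2 * (cA q j s * cA q j s') := fun j => by ring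
    simp only [this, Finset.sum_add_distrib, Finset.sum_sub_distrib, ← Finset.mul_sum,
      cA_sum_left, cA_sum_mul]
    simp; ring
  rw [← Finset.mul_sum]
  simp_rw [e]
  rw [Finset.sum_comm]
  have e3 : ∀ s : Fin q, ∑ τ : Fin k → Fin q, ∑ s', ((q:ℝ)⁻¹)^2 *
      ∏ i, ((1 - u * cA q (τ i) s) * (1 - u * cA q (τ i) s')) =
      ((q:ℝ)⁻¹)^2 * q^k * ((1 + u^2 * (q-1))^k + (q - 1) * (1 - u^2)^k) := by
    intro s
    rw [Finset.sum_comm]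
    have e4 : ∀ s' : Fin q, ∑ τ : Fin k → Fin q, ((q:ℝ)⁻¹)^2 *
      ∏ i, ((1 - u * cA q (τ i) s) * (1 - u * cA q (τ i) s')) =
      ((q:ℝ)⁻¹)^2 * q^k * (1 + u^2 * cA q s s')^k := by
      intro s'
      rw [← Finset.mul_sum, sum_prod_fn q k (fun j => (1 - u * cA q j s) * (1 - u * cA q j s')), e2,
        mul_pow, mul_assoc]
    simp_rw [e4, ← Finset.mul_sum]
    have : ∀ s' : Fin q, (1 + u^2 * cA q s s')^k =
      (if s = s' then ((1 + u^2 * (q-1))^k - (1-u^2)^k) else 0) + (1-u^2)^k := by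
      intro s'
      unfold cA; split_ifs
      · simp
      · simp [sub_eq_add_neg]
    simp_rw [this, Finset.sum_add_distrib]
    simp
    left; ring
  simp_rw [e3]
  simp
  field_simp

lemma poisson_hasSum (c a : ℝ) : HasSum (fun k => poissonPMF c k * a^k) (Real.exp (c * (a - 1))) := by
  have h := (NormedSpace.expSeries_div_hasSum_exp (𝔸 := ℝ) (c * a)).mul_left (Real.exp (-c))
  rw [← Real.exp_eq_exp_ℝ, ← Real.exp_add] at h
  have e1 : (fun k => poissonPMF c k * a^k) =
      fun k : ℕ => Real.exp (-c) * ((c * a) ^ k / (k.factorial : ℝ)) := by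
    funext k; unfold poissonPMF; rw [mul_pow]; ring
  have e2 : c * (a - 1) = -c + c * a := by ring
  rw [e1, e2]
  exact h

lemma cZ_bounds (q : ℕ) (hq : 2 ≤ q) (u : ℝ) (hu : |u| * q ≤ 1/2) (k : ℕ) (τ : Fin k → Fin q) :
    (1/2:ℝ)^k ≤ cZ q u k τ ∧ |cZ q u k τ - 1| ≤ u^2 * q^2 * 2^k := by
  have hq0 : (0:ℝ) < q := by positivity
  have H : ∀ s, _ := fun s => aux_prod (|u| * q) (by positivity) hu k (fun i => - (u * cA q (τ i) s))
    (fun i => by rw [abs_neg, abs_mul]; gcongr; exact cA_abs q hq _ _)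
  simp only [← sub_eq_add_neg, mul_pow, sq_abs] at H
  have hone : ∀ a : ℝ, ∑ s : Fin q, (q:ℝ)⁻¹ * a = a := by intro a; simp; field_simp
  constructor
  · rw [← hone ((1/2)^k)]
    unfold cZ
    gcongr with s
    exact (H s).2.2
  · have hs : ∑ s : Fin q, ∑ i, -(u * cA q (τ i) s) = 0 := by
      rw [Finset.sum_comm]
      simp [← Finset.mul_sum, cA_sum_right]
    have : cZ q u k τ - 1 = ∑ s : Fin q, (q:ℝ)⁻¹ *
        (∏ i, (1 - u * cA q (τ i) s) - 1 - ∑ i, -(u * cA q (τ i) s)) := by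
      simp_rw [mul_sub, Finset.sum_sub_distrib]
      rw [hone 1, ← Finset.mul_sum _ (fun s => ∑ i, -(u * cA q (τ i) s)), hs]
      simp [cZ]
    rw [this, ← hone (u^2 * q^2 * 2^k)]
    refine (Finset.abs_sum_le_sum_abs _ _).trans ?_
    gcongr with s
    rw [abs_mul, abs_of_pos (inv_pos.2 hq0)]
    gcongr
    exact (H s).2.1

lemma rem_bound (q : ℕ) (hq : 2 ≤ q) (u : ℝ) (hu : |u| * q ≤ 1/2) (k : ℕ) (τ : Fin k → Fin q) :
    |Real.log (cZ q u k τ) - (cZ q u k τ - 1) + (cZ q u k τ - 1)^2/2| ≤ 2 * u^6 * q^6 * 16^k := by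
  obtain ⟨h1, h2⟩ := cZ_bounds q hq u hu k τ
  set Z := cZ q u k τ
  have hh : (0:ℝ) < (1/2)^k := by positivity
  have hZ : 0 < Z := by linarith
  have h := aux_log (Z - 1) (by linarith)
  rw [add_sub_cancel] at h
  refine h.trans ?_
  have hi : Z⁻¹ ≤ 2^k := by
    rw [inv_le_comm₀ hZ (by positivity)]; simpa using h1
  have hp : (1:ℝ) ≤ 2^k := one_le_pow₀ (by norm_num)
  calc |Z-1|^3 * (1 + Z⁻¹) ≤ (u^2*q^2*2^k)^3 * (2^k + 2^k) := by gcongr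
    _ = 2 * u^6 * q^6 * (2^k)^4 := by ring
    _ = _ := by rw [← pow_mul, mul_comm k 4, pow_mul]; norm_num

lemma main_u (q : ℕ) (hq : 2 ≤ q) (c u : ℝ) (hc : 0 < c) (hu : |u| * q ≤ 1/2)
    (hu2 : c * u^2 * q ≤ 1) :
    |∑' k, poissonPMF c k * ∑ τ : Fin k → Fin q, ((q : ℝ) ^ k)⁻¹ * Real.log (cZ q u k τ) +
      1/4 * ((q:ℝ)-1) * c^2 * u^4| ≤ (2 * q^6 * Real.exp (c * 15) + c^3 * q^3) * u^6 := by
  have hq0 : (0:ℝ) < q := by positivity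
  have hq2 : (2:ℝ) ≤ q := by exact_mod_cast hq
  have hpk : ∀ k, 0 ≤ poissonPMF c k := fun k => by unfold poissonPMF; positivity
  let R : ℕ → ℝ := fun k => ∑ τ : Fin k → Fin q, ((q : ℝ) ^ k)⁻¹ *
    (Real.log (cZ q u k τ) - (cZ q u k τ - 1) + (cZ q u k τ - 1)^2/2)
  have honek : ∀ (k : ℕ) (a : ℝ), ∑ τ : Fin k → Fin q, ((q : ℝ) ^ k)⁻¹ * a = a := by
    intro k a; simp; field_simp
  have hR : ∀ k, |R k| ≤ 2 * u^6 * q^6 * 16^k := by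
    intro k
    rw [← honek k (2 * u^6 * q^6 * 16^k)]
    refine (Finset.abs_sum_le_sum_abs _ _).trans ?_
    gcongr with τ
    rw [abs_mul, abs_of_pos (by positivity : (0:ℝ) < ((q:ℝ)^k)⁻¹)]
    gcongr
    exact rem_bound q hq u hu k τ
  have hdec : ∀ k, ∑ τ : Fin k → Fin q, ((q : ℝ) ^ k)⁻¹ * Real.log (cZ q u k τ) =
      R k - 1/2 * ((q:ℝ)⁻¹ * (1 + u^2 * (q-1))^k + (1 - (q:ℝ)⁻¹) * (1 - u^2)^k - 1) := by
    intro k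
    rw [← E_two q hq u k]
    have e : ∀ τ : Fin k → Fin q, ((q : ℝ) ^ k)⁻¹ * Real.log (cZ q u k τ) =
      ((q : ℝ) ^ k)⁻¹ * (Real.log (cZ q u k τ) - (cZ q u k τ - 1) + (cZ q u k τ - 1)^2/2)
       + 2 * (((q : ℝ) ^ k)⁻¹ * cZ q u k τ) - 1/2 * (((q : ℝ) ^ k)⁻¹ * cZ q u k τ^2)
       - ((q : ℝ) ^ k)⁻¹ * (3/2) := fun τ => by ring
    rw [Finset.sum_congr rfl (fun τ _ => e τ), Finset.sum_sub_distrib, Finset.sum_sub_distrib,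
      Finset.sum_add_distrib, ← Finset.mul_sum _ _ (2:ℝ), ← Finset.mul_sum _ _ (1/2:ℝ), E_one q hq, honek]
    simp only [R]
    ring
  have hB : HasSum (fun k => 2 * u^6 * q^6 * (poissonPMF c k * 16^k))
      (2 * u^6 * q^6 * Real.exp (c * 15)) := by
    have := (poisson_hasSum c 16).mul_left (2 * u^6 * q^6)
    norm_num at this ⊢
    exact this
  have hle : ∀ k, ‖poissonPMF c k * R k‖ ≤ 2 * u^6 * q^6 * (poissonPMF c k * 16^k) := by
    intro k
    rw [Real.norm_eq_abs, abs_mul, abs_of_nonneg (hpk k)]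
    nlinarith [mul_le_mul_of_nonneg_left (hR k) (hpk k)]
  have hRs : Summable (fun k => poissonPMF c k * R k) := Summable.of_norm_bounded hB.summable hle
  have hRb := tsum_of_norm_bounded hB hle
  set T := ∑' k, poissonPMF c k * R k
  have hM := ((((poisson_hasSum c (1 + u^2 * (q-1))).mul_left (q:ℝ)⁻¹).add
    ((poisson_hasSum c (1 - u^2)).mul_left (1 - (q:ℝ)⁻¹))).sub (poisson_hasSum c 1)).mul_left (1/2)
  have hS := hRs.hasSum.sub hM
  have hfun : (fun k => poissonPMF c k * ∑ τ : Fin k → Fin q, ((q : ℝ) ^ k)⁻¹ * Real.log (cZ q u k τ))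
     = fun k => poissonPMF c k * R k - 1 / 2 *
          ((q:ℝ)⁻¹ * (poissonPMF c k * (1 + u ^ 2 * ((q:ℝ) - 1)) ^ k) +
          (1 - (q:ℝ)⁻¹) * (poissonPMF c k * (1 - u ^ 2) ^ k) - poissonPMF c k * 1 ^ k) := by
    funext k
    rw [hdec, one_pow]; ring
  have heq := hS.tsum_eq
  rw [← hfun] at heq
  rw [heq]
  have hexp : ∀ y : ℝ, |y| ≤ 1 → |Real.exp y - (1 + y + y^2/2)| ≤ |y|^3 := by
    intro y hy
    have := Real.exp_bound hy (n := 3) (by norm_num)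
    simp [Finset.sum_range_succ, Nat.factorial] at this
    refine this.trans ?_
    have : 0 ≤ |y|^3 := by positivity
    nlinarith
  have hcu : 0 ≤ c * u^2 := by positivity
  have a1 : |c * (1 + u^2 * ((q:ℝ)-1) - 1)| ≤ c * u^2 * q := by
    rw [abs_le]; constructor <;> nlinarith
  have a2 : |c * (1 - u^2 - 1)| ≤ c * u^2 * q := by
    rw [abs_le]; constructor <;> nlinarith
  have b1 := (hexp _ (a1.trans hu2)).trans (pow_le_pow_left₀ (abs_nonneg _) a1 3)
  have b2 := (hexp _ (a2.trans hu2)).trans (pow_le_pow_left₀ (abs_nonneg _) a2 3)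
  set y1 := c * (1 + u^2 * ((q:ℝ)-1) - 1) with hy1
  set y2 := c * (1 - u^2 - 1) with hy2
  have hi1 : 0 < (q:ℝ)⁻¹ := by positivity
  have hi2 : (q:ℝ)⁻¹ ≤ 1 := inv_le_one_of_one_le₀ (by linarith)
  have hqi : (q:ℝ)⁻¹ * q = 1 := by field_simp
  rw [sub_self, mul_zero, Real.exp_zero]
  have key : T - 1/2 * ((q:ℝ)⁻¹ * Real.exp y1 + (1 - (q:ℝ)⁻¹) * Real.exp y2 - 1)
      + 1/4 * ((q:ℝ)-1) * c^2*u^4 =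
      T - 1/2 * ((q:ℝ)⁻¹ * (Real.exp y1 - (1 + y1 + y1^2/2)) +
        (1 - (q:ℝ)⁻¹) * (Real.exp y2 - (1 + y2 + y2^2/2))) := by
    rw [hy1, hy2]
    field_simp
    ring
  rw [key]
  rw [Real.norm_eq_abs] at hRb
  set D1 := Real.exp y1 - (1 + y1 + y1^2/2)
  set D2 := Real.exp y2 - (1 + y2 + y2^2/2)
  rw [abs_le] at b1 b2 hRb ⊢
  have hB0 : 0 ≤ (c * u^2 * q)^3 := by positivity
  have e6 : (c * u^2 * q)^3 = c^3 * q^3 * u^6 := by ring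
  rw [e6] at *
  have m1 := mul_le_mul_of_nonneg_left b1.1 hi1.le
  have m2 := mul_le_mul_of_nonneg_left b1.2 hi1.le
  have m3 := mul_le_mul_of_nonneg_left b2.1 (sub_nonneg.2 hi2)
  have m4 := mul_le_mul_of_nonneg_left b2.2 (sub_nonneg.2 hi2)
  constructor <;> linarith [hRb.1, hRb.2]

/-- as `t → 0`,
`g⁽¹⁾(β,c,q,t) = -(1/4)(q-1) c² x⁴ t⁴ + O(t⁶)`. -/
theorem statement10 (q : ℕ) (hq : 2 ≤ q) (β c : ℝ) (hβ : 0 < β) (hc : 0 < c) :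
    ∃ C > (0 : ℝ), ∃ δ₀ > (0 : ℝ), ∀ t : ℝ, |t| ≤ δ₀ →
      |g1 q β c t + (1 / 4) * ((q : ℝ) - 1) * c ^ 2 *
          ((1 - Real.exp (-β)) / ((q : ℝ) - 1 + Real.exp (-β))) ^ 4 * t ^ 4|
        ≤ C * t ^ 6 := by
  have hq0 : (0:ℝ) < q := by positivity
  have hq2 : (2:ℝ) ≤ q := by exact_mod_cast hq
  have he : 0 < Real.exp (-β) := Real.exp_pos _
  have he1 : Real.exp (-β) < 1 := by rw [Real.exp_lt_one_iff]; linarith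
  unfold g1
  set x := (1 - Real.exp (-β)) / ((q : ℝ) - 1 + Real.exp (-β)) with hx
  have hx0 : 0 ≤ x := div_nonneg (by linarith) (by linarith)
  have hx1 : x ≤ 1 := by rw [hx, div_le_one (by linarith)]; linarith
  refine ⟨2 * q^6 * Real.exp (c * 15) + c^3 * q^3, by positivity,
    min (1/(2*q)) (1/(c*q)), by positivity, ?_⟩
  intro t ht
  have ht1 := ht.trans (min_le_left _ _)
  have ht2 := ht.trans (min_le_right _ _)
  rw [le_div_iff₀ (by positivity)] at ht1 ht2
  have hxt : |x * t| ≤ |t| := by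
    rw [abs_mul, abs_of_nonneg hx0]; exact mul_le_of_le_one_left (abs_nonneg _) hx1
  have h1 : |x*t| * q ≤ 1/2 := by nlinarith
  have h2 : c * (x*t)^2 * q ≤ 1 := by
    rw [← sq_abs]
    have h0 := abs_nonneg (x*t)
    have h3 : |x*t| ≤ 1 := by nlinarith
    have h4 : |x*t|^2 ≤ |t| := by nlinarith
    have : (c*q) * |x*t|^2 ≤ (c*q) * |t| := by gcongr
    linarith
  have := main_u q hq c (x*t) hc h1 h2
  rw [mul_pow x t 4, ← mul_assoc] at this
  refine le_trans this ?_
  gcongr ?_ * ?_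
  rw [← (by decide : Even 6).pow_abs, ← (by decide : Even 6).pow_abs t]
  gcongr
end

section
/- Let q = 2. If either c ≤ 1, or c > 1 and 0 ≤ β ≤ −ln(1 − 2/(1+√c)), then the quenched pressure equals the annealed pressure in the thermodynamic limit: p(β,c,2) = lim_{N→∞} p_N(β,c,2) = 𝒫(β,c,2). -/
open MeasureTheory Filter

noncomputable def Fk {ι : Type} [Fintype ι] [DecidableEq ι] : ℕ → ((ι → ℕ) → ℝ) → ℝ
  | 0, g => g 0
  | k+1, g => (∑ i, Fk k (fun J => g (J + Pi.single i 1))) / Fintype.card ι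

section F
variable {ι : Type} [Fintype ι] [DecidableEq ι]

lemma Fk_add (k : ℕ) (f g : (ι → ℕ) → ℝ) : Fk k (fun J => f J + g J) = Fk k f + Fk k g := by
  induction k generalizing f g with
  | zero => simp [Fk]
  | succ k ih => simp only [Fk, ih, Finset.sum_add_distrib, add_div]

lemma Fk_mul (k : ℕ) (c : ℝ) (f : (ι → ℕ) → ℝ) : Fk k (fun J => c * f J) = c * Fk k f := by
  induction k generalizing f with
  | zero => simp [Fk]
  | succ k ih => simp only [Fk, ih, ← Finset.mul_sum, mul_div_assoc]

lemma Fk_mono (k : ℕ) (f g : (ι → ℕ) → ℝ) (h : ∀ J, f J ≤ g J) : Fk k f ≤ Fk k g := by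
  induction k generalizing f g with
  | zero => simpa [Fk] using h 0
  | succ k ih =>
    simp only [Fk]
    gcongr with i
    exact ih _ _ (fun J => h _)

lemma Fk_sum {A : Type} (s : Finset A) (k : ℕ) (f : A → (ι → ℕ) → ℝ) :
    Fk k (fun J => ∑ a ∈ s, f a J) = ∑ a ∈ s, Fk k (f a) := by
  classical
  induction s using Finset.induction_on with
  | empty => simpa using Fk_mul k 0 (fun _ : ι → ℕ => (0:ℝ))
  | insert a s ha ih => simp only [Finset.sum_insert ha, Fk_add, ih]

lemma Fk_succ (k : ℕ) (g : (ι → ℕ) → ℝ) :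
    Fk (k+1) g = Fk k (fun J => (1 / (Fintype.card ι : ℝ)) * ∑ i, g (J + Pi.single i 1)) := by
  rw [Fk_mul, Fk_sum]; simp only [Fk]; ring

lemma Fk_lin [Nonempty ι] (k : ℕ) (x y : ℝ) :
    Fk k (fun J : ι → ℕ => x + y * ((∑ i, J i : ℕ) : ℝ)) = x + y * k := by
  induction k generalizing x with
  | zero => simp [Fk]
  | succ k ih =>
    have : ∀ i : ι, Fk k (fun J : ι → ℕ => x + y * ((∑ l, (J + Pi.single i 1 : ι → ℕ) l : ℕ) : ℝ))
        = (x + y) + y * k := by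
      intro i
      rw [← ih]
      congr 1
      ext J
      simp only [Pi.add_apply, Finset.sum_add_distrib, Finset.sum_pi_single', Finset.mem_univ, if_true, Nat.cast_add]
      push_cast
      ring
    simp only [Fk, this]
    simp only [Finset.sum_const, Finset.card_univ, nsmul_eq_mul]
    have : (Fintype.card ι : ℝ) ≠ 0 := by exact_mod_cast Fintype.card_ne_zero
    field_simp
    push_cast; ring

lemma Fk_const [Nonempty ι] (k : ℕ) (x : ℝ) : Fk k (fun _ : ι → ℕ => x) = x := by
  simpa using Fk_lin (ι := ι) k x 0

lemma prod_single (φ : ι → ℝ) (J : ι → ℕ) (i : ι) :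
    ∏ l, φ l ^ (J + Pi.single i 1 : ι → ℕ) l = φ i * ∏ l, φ l ^ J l := by
  simp only [Pi.add_apply, pow_add, Finset.prod_mul_distrib]
  have : ∏ l, φ l ^ (Pi.single i 1 : ι → ℕ) l = φ i := by
    rw [Finset.prod_eq_single i]
    · simp
    · intro b _ hb; simp [Pi.single_eq_of_ne hb]
    · simp
  rw [this]; ring

lemma Fk_prod (k : ℕ) (φ : ι → ℝ) :
    Fk k (fun J => ∏ i, φ i ^ J i) = ((∑ i, φ i) / Fintype.card ι) ^ k := by
  induction k with
  | zero => simp [Fk]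
  | succ k ih =>
    simp only [Fk, prod_single, Fk_mul, ih, ← Finset.sum_mul]
    ring

lemma Fk_log [Nonempty ι] (k : ℕ) (f : (ι → ℕ) → ℝ) (hf : ∀ J, 0 < f J) (B : ℝ) (hB : 0 < B)
    (h : Fk k f ≤ B) : Fk k (fun J => Real.log (f J)) ≤ Real.log B := by
  calc _ ≤ Fk k (fun J => (Real.log B - 1) + (1 / B) * f J) := by
        apply Fk_mono
        intro J
        have := Real.log_le_sub_one_of_pos (div_pos (hf J) hB)
        rw [Real.log_div (hf J).ne' hB.ne'] at this
        have e : f J / B = 1 / B * f J := by ring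
        linarith
    _ = (Real.log B - 1) + (1/B) * Fk k f := by rw [Fk_add, Fk_const, Fk_mul]
    _ ≤ (Real.log B - 1) + (1/B) * B := by gcongr
    _ = Real.log B := by field_simp; ring

lemma gibbs {A : Type} [Fintype A] [Nonempty A] (W h : A → ℝ) (hW : ∀ a, 0 < W a) :
    (∑ a, W a * h a) / (∑ a, W a) ≤ Real.log (∑ a, W a * Real.exp (h a)) - Real.log (∑ a, W a) := by
  have hS : 0 < ∑ a, W a := Finset.sum_pos (fun a _ => hW a) Finset.univ_nonempty
  set S := ∑ a, W a
  set x := (∑ a, W a * h a) / S with hx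
  have hx' : ∑ a, W a * h a = x * S := by rw [hx]; field_simp
  have key : Real.exp x * S ≤ ∑ a, W a * Real.exp (h a) := by
    calc Real.exp x * S = ∑ a, W a * (Real.exp x * (1 + (h a - x))) := by
          have : ∀ a, W a * (Real.exp x * (1 + (h a - x)))
            = Real.exp x * (W a * (1 - x) + W a * h a) := by intro a; ring
          simp only [this, ← Finset.mul_sum, Finset.sum_add_distrib, ← Finset.sum_mul, hx']
          ring
      _ ≤ _ := by
          gcongr with a
          · exact (hW a).le
          have := Real.add_one_le_exp (h a - x)
          calc _ ≤ Real.exp x * Real.exp (h a - x) := by gcongr; linarith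
            _ = _ := by rw [← Real.exp_add]; ring_nf
  have := Real.log_le_log (by positivity) key
  rw [Real.log_mul (by positivity) hS.ne', Real.log_exp] at this
  linarith

lemma coupled [Nonempty ι] {A : Type} [Fintype A] [Nonempty A] (p : ℝ) (hp : 0 < p)
    (φ : ι → A → ℝ) (hφ : ∀ i a, 0 < φ i a) (h : A → ℝ) (k : ℕ) (B : ℝ) (hB : 0 < B)
    (hle : ∑ a, p * Real.exp (h a) * ((∑ i, φ i a) / Fintype.card ι) ^ k ≤ B) :
    Fk k (fun J => (∑ a, (p * ∏ i, φ i a ^ J i) * h a) / (∑ a, p * ∏ i, φ i a ^ J i)) ≤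
      Real.log B - Fk k (fun J => Real.log (∑ a, p * ∏ i, φ i a ^ J i)) := by
  have hW : ∀ J : ι → ℕ, ∀ a, 0 < p * ∏ i, φ i a ^ J i := fun J a =>
    mul_pos hp (Finset.prod_pos fun i _ => pow_pos (hφ i a) _)
  have h1 := Fk_mono k _ _ (fun J => gibbs (fun a => p * ∏ i, φ i a ^ J i) h (hW J))
  have h2 : Fk k (fun J => Real.log (∑ a, (p * ∏ i, φ i a ^ J i) * Real.exp (h a))) ≤ Real.log B := by
    apply Fk_log k _ _ B hB
    · rw [Fk_sum]
      refine le_trans (le_of_eq ?_) hle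
      apply Finset.sum_congr rfl
      intro a _
      rw [← Fk_prod, ← Fk_mul]
      congr 1; ext J; ring
    · intro J
      exact Finset.sum_pos (fun a _ => mul_pos (hW J a) (Real.exp_pos _)) Finset.univ_nonempty
  have h3 : Fk k (fun J => Real.log (∑ a, (p * ∏ i, φ i a ^ J i) * Real.exp (h a)) - Real.log (∑ a, p * ∏ i, φ i a ^ J i)) = Fk k (fun J => Real.log (∑ a, (p * ∏ i, φ i a ^ J i) * Real.exp (h a))) - Fk k (fun J => Real.log (∑ a, p * ∏ i, φ i a ^ J i)) := by
    have := Fk_add k (fun J => Real.log (∑ a, (p * ∏ i, φ i a ^ J i) * Real.exp (h a))) (fun J => (-1) * Real.log (∑ a, p * ∏ i, φ i a ^ J i))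
    rw [Fk_mul] at this
    calc _ = _ := by congr 1; ext J; exact (show _ = _ + (-1) * _ by ring)
      _ = _ := this
      _ = _ := by ring
  rw [h3] at h1
  linarith

/-- sum over level sets -/
lemma Fk_antidiag [Nonempty ι] (k : ℕ) (g : (ι → ℕ) → ℝ) :
    ∑ J ∈ Finset.piAntidiag (Finset.univ : Finset ι) k, (∏ i, ((J i).factorial : ℝ)⁻¹) * g J
      = (Fintype.card ι : ℝ) ^ k / k.factorial * Fk k g := by
  have hc : (Fintype.card ι : ℝ) ≠ 0 := by exact_mod_cast Fintype.card_ne_zero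
  induction k generalizing g with
  | zero => simp [Fk]
  | succ k ih =>
    have key : ∀ i : ι, ∑ J ∈ Finset.piAntidiag (Finset.univ : Finset ι) (k+1),
        (J i : ℝ) * ((∏ i, ((J i).factorial : ℝ)⁻¹) * g J)
        = ∑ J ∈ Finset.piAntidiag (Finset.univ : Finset ι) k,
          (∏ i, ((J i).factorial : ℝ)⁻¹) * g (J + Pi.single i 1) := by
      intro i
      symm
      apply Finset.sum_bij_ne_zero (fun J _ _ => J + Pi.single i 1)
      · intro J hJ _
        simp only [Finset.mem_piAntidiag] at hJ ⊢
        refine ⟨?_, by simp⟩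
        simp [Finset.sum_add_distrib, ← hJ.1]
      · intro J _ _ J' _ _ h
        exact add_right_cancel h
      · intro J hJ h0
        have hJi : J i ≠ 0 := by
          intro h; apply h0; simp [h]
        have hJe : J - Pi.single i 1 + Pi.single i 1 = J := by
          ext l
          by_cases hl : l = i
          · subst hl; simp; omega
          · simp [Pi.single_eq_of_ne hl]
        have hw : (J i : ℝ) * (∏ l, ((J l).factorial : ℝ)⁻¹) = ∏ l, (((J - Pi.single i 1 : ι → ℕ) l).factorial : ℝ)⁻¹ := by
          rw [← Finset.mul_prod_erase _ _ (Finset.mem_univ i), ← Finset.mul_prod_erase (a := i) _ _ (Finset.mem_univ i), ← mul_assoc]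
          congr 1
          · obtain ⟨n, hn⟩ := Nat.exists_eq_succ_of_ne_zero hJi
            simp [hn, Nat.factorial_succ]
            field_simp
          · apply Finset.prod_congr rfl
            intro l hl
            simp [Pi.single_eq_of_ne (Finset.ne_of_mem_erase hl)]
        refine ⟨J - Pi.single i 1, ?_, ?_, hJe⟩
        · simp only [Finset.mem_piAntidiag] at hJ ⊢
          refine ⟨?_, by simp⟩
          have : ∑ l, (J - Pi.single i 1 + Pi.single i 1 : ι → ℕ) l = k + 1 := by rw [hJe]; exact hJ.1
          simp only [Pi.add_apply, Finset.sum_add_distrib, Finset.sum_pi_single', Finset.mem_univ, if_true] at this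
          simpa using this
        · rw [hJe, ← hw, mul_assoc]; exact h0
      · intro J hJ _
        have : ((J i : ℝ) + 1) * (∏ l, (((J + Pi.single i 1 : ι → ℕ) l).factorial : ℝ)⁻¹) = ∏ l, ((J l).factorial : ℝ)⁻¹ := by
          rw [← Finset.mul_prod_erase _ _ (Finset.mem_univ i), ← Finset.mul_prod_erase (a := i) _ _ (Finset.mem_univ i), ← mul_assoc]
          congr 1
          · simp [Nat.factorial_succ]
            field_simp
          · apply Finset.prod_congr rfl
            intro l hl
            simp [Pi.single_eq_of_ne (Finset.ne_of_mem_erase hl)]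
        rw [← this]; simp; ring
    have h1 : ((k : ℝ) + 1) * ∑ J ∈ Finset.piAntidiag (Finset.univ : Finset ι) (k+1), (∏ i, ((J i).factorial : ℝ)⁻¹) * g J
       = ∑ i, ∑ J ∈ Finset.piAntidiag (Finset.univ : Finset ι) (k+1),
        (J i : ℝ) * ((∏ i, ((J i).factorial : ℝ)⁻¹) * g J) := by
      rw [Finset.sum_comm, Finset.mul_sum]
      apply Finset.sum_congr rfl
      intro J hJ
      rw [← Finset.sum_mul]
      congr 1
      have := (Finset.mem_piAntidiag.1 hJ).1
      rw [← Nat.cast_sum, this]; push_cast; ring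
    simp only [key, ih, ← Finset.mul_sum] at h1
    have hk : ((k : ℝ) + 1) ≠ 0 := by positivity
    apply mul_left_cancel₀ hk
    rw [h1]
    simp only [Fk, Nat.factorial_succ]
    push_cast
    field_simp
    ring
end F

section T
variable {ι : Type} [Fintype ι] [DecidableEq ι]

lemma fiber_hasSum (f : (ι → ℕ) → ℝ) (k : ℕ) :
    HasSum (fun J : {J : ι → ℕ // ∑ i, J i = k} => f J)
      (∑ J ∈ Finset.piAntidiag (Finset.univ : Finset ι) k, f J) := by
  have h := (Finset.piAntidiag (Finset.univ : Finset ι) k).hasSum f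
  let e : {J : ι → ℕ // ∑ i, J i = k} ≃ {J // J ∈ Finset.piAntidiag (Finset.univ : Finset ι) k} :=
    Equiv.subtypeEquivRight (fun J => by simp [Finset.mem_piAntidiag])
  exact (e.hasSum_iff).2 h

lemma pois_fiber [Nonempty ι] (μ : ℝ) (g : (ι → ℕ) → ℝ) (k : ℕ) :
    ∑ J ∈ Finset.piAntidiag (Finset.univ : Finset ι) k, (∏ i, poissonPMF μ (J i)) * g J
      = poissonPMF (Fintype.card ι * μ) k * Fk k g := by
  have : ∀ J ∈ Finset.piAntidiag (Finset.univ : Finset ι) k, (∏ i, poissonPMF μ (J i)) * g J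
     = (Real.exp (-(Fintype.card ι * μ)) * μ ^ k) * ((∏ i, ((J i).factorial : ℝ)⁻¹) * g J) := by
    intro J hJ
    have hk := (Finset.mem_piAntidiag.1 hJ).1
    simp only [poissonPMF, div_eq_mul_inv, Finset.prod_mul_distrib, Finset.prod_const,
      Finset.prod_pow_eq_pow_sum, hk, Finset.card_univ, ← Real.exp_nat_mul]
    ring_nf
  rw [Finset.sum_congr rfl this, ← Finset.mul_sum, Fk_antidiag]
  simp only [poissonPMF, mul_pow]
  ring

lemma pois_nonneg {μ : ℝ} (hμ : 0 ≤ μ) (k : ℕ) : 0 ≤ poissonPMF μ k := by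
  unfold poissonPMF; positivity

lemma pois_sum (μ : ℝ) : HasSum (poissonPMF μ) 1 := by
  have h := (NormedSpace.expSeries_div_hasSum_exp (𝔸 := ℝ) μ).mul_left (Real.exp (-μ))
  rw [← Real.exp_eq_exp_ℝ, ← Real.exp_add] at h
  simp only [neg_add_cancel, Real.exp_zero] at h
  have e : poissonPMF μ = fun i : ℕ => Real.exp (-μ) * (μ ^ i / (i.factorial : ℝ)) := by
    ext k
    simp [poissonPMF, mul_div_assoc]
  rw [e]
  exact h

lemma pois_shift (μ : ℝ) (k : ℕ) : poissonPMF μ (k+1) * ((k : ℝ) + 1) = μ * poissonPMF μ k := by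
  unfold poissonPMF
  rw [Nat.factorial_succ]
  push_cast
  field_simp
  ring

lemma pois_mean (μ : ℝ) : HasSum (fun k : ℕ => poissonPMF μ k * (k : ℝ)) μ := by
  rw [← hasSum_nat_add_iff' 1]
  have := (pois_sum μ).mul_left μ
  simpa [pois_shift] using this

lemma pois_sq (μ : ℝ) : HasSum (fun k : ℕ => poissonPMF μ k * (k : ℝ)^2) (μ ^ 2 + μ) := by
  rw [← hasSum_nat_add_iff' 1]
  have := ((pois_mean μ).mul_left μ).add ((pois_sum μ).mul_left μ)
  have e : (fun k : ℕ => poissonPMF μ (k+1) * ((k+1 : ℕ) : ℝ)^2) =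
     fun k : ℕ => μ * (poissonPMF μ k * (k:ℝ)) + μ * poissonPMF μ k := by
    ext k
    have := pois_shift μ k
    push_cast
    linear_combination ((k:ℝ)+1) * this
  have e2 : μ ^ 2 + μ - ∑ i ∈ Finset.range 1, poissonPMF μ i * (i : ℝ)^2 = μ * μ + μ * 1 := by
    simp; ring
  rw [e2, e]
  exact this

lemma pois_var (μ : ℝ) : HasSum (fun k : ℕ => poissonPMF μ k * ((k : ℝ) - μ)^2) μ := by
  have := ((pois_sq μ).add ((pois_mean μ).mul_left (-2 * μ))).add ((pois_sum μ).mul_left (μ^2))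
  convert this using 1
  · ext k; ring
  · ring

lemma transfer [Nonempty ι] {μ : ℝ} (hμ : 0 ≤ μ) (g : (ι → ℕ) → ℝ) (a b : ℝ)
    (hg : ∀ J, |g J| ≤ a + b * ((∑ i, J i : ℕ) : ℝ)) :
    HasSum (fun k => poissonPMF (Fintype.card ι * μ) k * Fk k g)
      (∑' J : ι → ℕ, (∏ i, poissonPMF μ (J i)) * g J) := by
  set f : (ι → ℕ) → ℝ := fun J => (∏ i, poissonPMF μ (J i)) * g J with hf
  let e := Equiv.sigmaFiberEquiv (fun J : ι → ℕ => ∑ i, J i)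
  have hM : 0 ≤ Fintype.card ι * μ := by positivity
  have hfa : ∀ J, |f J| = (∏ i, poissonPMF μ (J i)) * |g J| := by
    intro J
    rw [hf, abs_mul, abs_of_nonneg (Finset.prod_nonneg fun i _ => pois_nonneg hμ _)]
  have hs : Summable (fun x => f (e x)) := by
    rw [← summable_abs_iff]
    rw [summable_sigma_of_nonneg (fun _ => abs_nonneg _)]
    have hfib : ∀ k, HasSum (fun J : {J : ι → ℕ // ∑ i, J i = k} => |f (e ⟨k, J⟩)|)
      (poissonPMF (Fintype.card ι * μ) k * Fk k (fun J => |g J|)) := by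
      intro k
      have := fiber_hasSum (fun J => |f J|) k
      simp only [hfa] at this
      rw [pois_fiber μ (fun J => |g J|)] at this
      simp only [← hfa] at this
      exact this
    refine ⟨fun k => (hfib k).summable, ?_⟩
    have : (fun k => ∑' (J : {J : ι → ℕ // ∑ i, J i = k}), |f (e ⟨k, J⟩)|)
      = fun k => (poissonPMF (Fintype.card ι * μ) k * Fk k (fun J => |g J|)) := by
      ext k; exact (hfib k).tsum_eq
    refine Summable.of_nonneg_of_le (f := fun k => a * poissonPMF (Fintype.card ι * μ) k + b * (poissonPMF (Fintype.card ι * μ) k * k)) ?_ ?_ ?_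
    · intro k; exact tsum_nonneg fun _ => abs_nonneg _
    · intro k
      have h1 := congrFun this k
      refine h1.trans_le ?_
      have h2 := Fk_mono k _ _ hg
      rw [Fk_lin] at h2
      have := mul_le_mul_of_nonneg_left h2 (pois_nonneg hM k)
      linarith
    · exact ((pois_sum _).summable.mul_left a).add ((pois_mean _).summable.mul_left b)
  have h1 : HasSum (fun x => f (e x)) (∑' J, f J) := by
    have := hs.hasSum
    rwa [e.tsum_eq f] at this
  refine h1.sigma (fun k => ?_)
  rw [← pois_fiber]
  exact fiber_hasSum f k
end T

noncomputable def sp (x : Fin 2) : ℝ := if x = 0 then 1 else -1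
lemma sp_sq (x : Fin 2) : sp x * sp x = 1 := by unfold sp; split_ifs <;> norm_num
lemma sp_abs (x : Fin 2) : |sp x| = 1 := by unfold sp; split_ifs <;> norm_num
lemma sp_mul (x y : Fin 2) : sp x * sp y = if x = y then 1 else -1 := by
  fin_cases x <;> fin_cases y <;> simp [sp]

noncomputable def ss {N : ℕ} (σ : Fin N → Fin 2) (e : Fin N × Fin N) : ℝ := sp (σ e.1) * sp (σ e.2)
noncomputable def rr {N : ℕ} (σ τ : Fin N → Fin 2) : ℝ := ∑ i, sp (σ i) * sp (τ i)

lemma ss_abs {N : ℕ} (σ : Fin N → Fin 2) (e) : |ss σ e| = 1 := by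
  simp [ss, abs_mul, sp_abs]

lemma sum_ss {N : ℕ} (σ : Fin N → Fin 2) : ∑ e, ss σ e = rr σ 0 ^ 2 := by
  simp only [ss, Fintype.sum_prod_type, rr, sq, Finset.sum_mul_sum]
  simp [sp]

lemma sum_ss2 {N : ℕ} (σ τ : Fin N → Fin 2) : ∑ e, ss σ e * ss τ e = rr σ τ ^ 2 := by
  simp only [ss, Fintype.sum_prod_type, rr, sq, Finset.sum_mul_sum]
  apply Finset.sum_congr rfl; intro i _
  apply Finset.sum_congr rfl; intro j _
  ring

lemma rr_abs {N : ℕ} (σ τ : Fin N → Fin 2) : |rr σ τ| ≤ N := by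
  unfold rr
  refine (Finset.abs_sum_le_sum_abs _ _).trans ?_
  simp [abs_mul, sp_abs]

lemma rr_int {N : ℕ} (σ τ : Fin N → Fin 2) : ∃ z : ℤ, (z : ℝ) = rr σ τ := by
  refine ⟨∑ i, if σ i = τ i then 1 else -1, ?_⟩
  simp only [rr, sp_mul]
  push_cast
  rfl

lemma avg_lin {N : ℕ} (τ : Fin N → Fin 2) (θ : ℝ) :
    ∑ σ : Fin N → Fin 2, (1 / 2 ^ N : ℝ) * Real.exp (θ * rr σ τ) ≤ Real.exp (N * (θ^2/2)) := by
  have h1 : ∑ σ : Fin N → Fin 2, Real.exp (θ * rr σ τ)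
      = ∏ i : Fin N, ∑ x : Fin 2, Real.exp (θ * (sp x * sp (τ i))) := by
    rw [Finset.prod_univ_sum]
    simp [rr, Finset.mul_sum, Real.exp_sum]
  have h2 : ∀ i : Fin N, ∑ x : Fin 2, Real.exp (θ * (sp x * sp (τ i))) = 2 * Real.cosh θ := by
    intro i
    have : τ i = 0 ∨ τ i = 1 := by omega
    rw [Real.cosh_eq]
    rcases this with h | h <;> simp [h, sp, Fin.sum_univ_two] <;> ring
  rw [← Finset.mul_sum, h1]
  simp only [h2, Finset.prod_const, Finset.card_univ, Fintype.card_fin]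
  rw [Real.exp_nat_mul, mul_pow, ← mul_assoc]
  simp only [one_div, ne_eq, pow_eq_zero_iff', OfNat.ofNat_ne_zero, false_and, not_false_eq_true, inv_mul_cancel₀, one_mul]
  exact pow_le_pow_left₀ (Real.cosh_pos _).le (Real.cosh_le_exp_half_sq θ) N

lemma avg_exp {N : ℕ} (hN : 0 < N) (τ : Fin N → Fin 2) :
    ∑ σ : Fin N → Fin 2, (1 / 2 ^ N : ℝ) * Real.exp (rr σ τ ^ 2 / (2 * N)) ≤ 2 * N + 1 := by
  have hN' : (0 : ℝ) < N := by exact_mod_cast hN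
  have h1 : ∀ σ : Fin N → Fin 2, Real.exp (rr σ τ ^ 2 / (2 * N)) ≤
      ∑ v ∈ Finset.Icc (-(N:ℤ)) N, Real.exp (-((v:ℝ)^2 / (2*N))) * Real.exp ((v : ℝ) / N * rr σ τ) := by
    intro σ
    obtain ⟨z, hz⟩ := rr_int σ τ
    have hz2 := rr_abs σ τ
    rw [← hz] at hz2 ⊢
    have hz3 : z ∈ Finset.Icc (-(N:ℤ)) N := by
      rw [Finset.mem_Icc]
      rw [abs_le] at hz2
      exact_mod_cast hz2
    refine le_trans (le_of_eq ?_) (Finset.single_le_sum (f := fun v : ℤ => Real.exp (-((v:ℝ)^2 / (2*N))) * Real.exp ((v : ℝ) / N * (z : ℝ))) (fun _ _ => by positivity) hz3)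
    rw [← Real.exp_add]
    congr 1
    field_simp
    ring
  calc _ ≤ ∑ σ : Fin N → Fin 2, (1 / 2 ^ N : ℝ) * ∑ v ∈ Finset.Icc (-(N:ℤ)) N, Real.exp (-((v:ℝ)^2 / (2*N))) * Real.exp ((v : ℝ) / N * rr σ τ) := by
        gcongr with σ
        exact h1 σ
    _ = ∑ v ∈ Finset.Icc (-(N:ℤ)) N, Real.exp (-((v:ℝ)^2 / (2*N))) * ∑ σ : Fin N → Fin 2, (1 / 2 ^ N : ℝ) * Real.exp ((v : ℝ) / N * rr σ τ) := by
        simp only [Finset.mul_sum]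
        rw [Finset.sum_comm]
        refine Finset.sum_congr rfl fun v _ => Finset.sum_congr rfl fun σ _ => by ring
    _ ≤ ∑ v ∈ Finset.Icc (-(N:ℤ)) N, (1 : ℝ) := by
        apply Finset.sum_le_sum
        intro v _
        calc _ ≤ Real.exp (-((v:ℝ)^2 / (2*N))) * Real.exp (N * (((v:ℝ)/N)^2/2)) := by
              gcongr
              exact avg_lin τ _
          _ = 1 := by
              rw [← Real.exp_add, Real.exp_eq_one_iff]
              field_simp
              ring
    _ = 2 * N + 1 := by
        simp only [Finset.sum_const, Int.card_Icc, nsmul_eq_mul, mul_one]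
        have : ((N:ℤ) + 1 - -(N:ℤ)).toNat = 2 * N + 1 := by omega
        rw [this]; push_cast; ring

/-- normalised partition function -/
noncomputable def Yf (N : ℕ) (t : ℝ) (J : Fin N × Fin N → ℕ) : ℝ :=
  ∑ σ : Fin N → Fin 2, (1 / 2 ^ N : ℝ) * ∏ e, (1 - t * ss σ e) ^ J e

noncomputable def xe (N : ℕ) (t : ℝ) (J : Fin N × Fin N → ℕ) (e : Fin N × Fin N) : ℝ :=
  (∑ σ : Fin N → Fin 2, ((1 / 2 ^ N : ℝ) * ∏ e, (1 - t * ss σ e) ^ J e) * ss σ e) / Yf N t J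

section M
variable {N : ℕ} {t : ℝ}

lemma phi_pos (ht0 : 0 ≤ t) (ht1 : t < 1) (σ : Fin N → Fin 2) (e) : 0 < 1 - t * ss σ e := by
  have := abs_le.1 (ss_abs σ e).le
  nlinarith

lemma w_pos (ht0 : 0 ≤ t) (ht1 : t < 1) (J : Fin N × Fin N → ℕ) (σ : Fin N → Fin 2) :
    0 < (1 / 2 ^ N : ℝ) * ∏ e, (1 - t * ss σ e) ^ J e :=
  mul_pos (by positivity) (Finset.prod_pos fun e _ => pow_pos (phi_pos ht0 ht1 σ e) _)

lemma Yf_pos (ht0 : 0 ≤ t) (ht1 : t < 1) (J : Fin N × Fin N → ℕ) : 0 < Yf N t J :=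
  Finset.sum_pos (fun σ _ => w_pos ht0 ht1 J σ) Finset.univ_nonempty

lemma xe_abs (ht0 : 0 ≤ t) (ht1 : t < 1) (J : Fin N × Fin N → ℕ) (e) : |xe N t J e| ≤ 1 := by
  rw [xe, abs_div, abs_of_pos (Yf_pos ht0 ht1 J), div_le_one (Yf_pos ht0 ht1 J)]
  refine (Finset.abs_sum_le_sum_abs _ _).trans ?_
  unfold Yf
  apply Finset.sum_le_sum
  intro σ _
  rw [abs_mul, ss_abs, mul_one, abs_of_pos (w_pos ht0 ht1 J σ)]

lemma Yf_succ (ht0 : 0 ≤ t) (ht1 : t < 1) (J : Fin N × Fin N → ℕ) (e) :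
    Yf N t (J + Pi.single e 1) = Yf N t J * (1 - t * xe N t J e) := by
  have h := (Yf_pos ht0 ht1 J).ne'
  have : Yf N t J * (1 - t * xe N t J e) = Yf N t J - t * (∑ σ : Fin N → Fin 2, ((1 / 2 ^ N : ℝ) * ∏ e, (1 - t * ss σ e) ^ J e) * ss σ e) := by
    rw [xe]; field_simp
  rw [this]
  simp only [Yf, prod_single (fun l => 1 - t * ss _ l), Finset.mul_sum, ← Finset.sum_sub_distrib]
  apply Finset.sum_congr rfl; intro σ _
  ring

lemma log_Yf_succ (ht0 : 0 ≤ t) (ht1 : t < 1) (J : Fin N × Fin N → ℕ) (e) :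
    Real.log (Yf N t (J + Pi.single e 1)) = Real.log (Yf N t J) + Real.log (1 - t * xe N t J e) := by
  rw [Yf_succ ht0 ht1, Real.log_mul (Yf_pos ht0 ht1 J).ne']
  have := abs_le.1 (xe_abs ht0 ht1 J e)
  have : 0 < 1 - t * xe N t J e := by nlinarith
  exact this.ne'

noncomputable def Lk (N : ℕ) (t : ℝ) (k : ℕ) : ℝ := Fk k (fun J => Real.log (Yf N t J))

lemma Lk_zero : Lk N t 0 = 0 := by simp [Lk, Fk, Yf]

lemma Lk_succ (hN : 0 < N) (ht0 : 0 ≤ t) (ht1 : t < 1) (k : ℕ) :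
    Lk N t (k+1) = Lk N t k + Fk k (fun J => (1 / (N:ℝ)^2) * ∑ e, Real.log (1 - t * xe N t J e)) := by
  have hN' : (N : ℝ) ≠ 0 := by exact_mod_cast hN.ne'
  rw [Lk, Lk, Fk_succ, ← Fk_add]
  congr 1
  ext J
  simp only [log_Yf_succ ht0 ht1, Finset.sum_add_distrib, Finset.sum_const, Finset.card_univ, Fintype.card_prod, Fintype.card_fin, nsmul_eq_mul]
  push_cast
  field_simp

lemma Lk_lip (hN : 0 < N) (ht0 : 0 ≤ t) (ht1 : t < 1) (k : ℕ) :
    |Lk N t (k+1) - Lk N t k| ≤ - Real.log (1 - t) := by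
  have hN' : (N : ℝ) ≠ 0 := by exact_mod_cast hN.ne'
  have : NeZero N := ⟨hN.ne'⟩
  rw [Lk_succ hN ht0 ht1]
  have hb : ∀ J e, -(-Real.log (1-t)) ≤ Real.log (1 - t * xe N t J e) ∧ Real.log (1 - t * xe N t J e) ≤ -Real.log (1 - t) := by
    intro J e
    have := abs_le.1 (xe_abs ht0 ht1 J e)
    have h0 : 1 - t ≤ 1 - t * xe N t J e := by nlinarith
    constructor
    · rw [neg_neg]
      exact Real.log_le_log (by linarith) h0
    · rw [← Real.log_inv]
      apply Real.log_le_log (by linarith)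
      rw [← one_div, le_div_iff₀ (by linarith)]
      have h9 : 1 - t * xe N t J e ≤ 1 + t := by nlinarith
      nlinarith [mul_le_mul_of_nonneg_right h9 (by linarith : 0 ≤ 1 - t), sq_nonneg t]
  have e1 : ∀ x : ℝ, x = (1 / (N:ℝ)^2) * ∑ e : Fin N × Fin N, x := by
    intro x
    simp only [Finset.sum_const, Finset.card_univ, Fintype.card_prod, Fintype.card_fin, nsmul_eq_mul]
    push_cast
    field_simp
  rw [add_sub_cancel_left, abs_le]
  constructor
  · rw [← Fk_const (ι := Fin N × Fin N) k (-(-Real.log (1-t)))]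
    apply Fk_mono; intro J
    rw [e1 (-(-Real.log (1-t)))]
    gcongr with e
    exact (hb J e).1
  · rw [← Fk_const (ι := Fin N × Fin N) k ((-Real.log (1-t)))]
    apply Fk_mono; intro J
    rw [e1 ((-Real.log (1-t)))]
    gcongr with e
    exact (hb J e).2

lemma avg_phi (hN : 0 < N) (σ : Fin N → Fin 2) :
    (∑ e, (1 - t * ss σ e)) / Fintype.card (Fin N × Fin N) = 1 - t * (rr σ 0 / N)^2 := by
  have hN' : (N : ℝ) ≠ 0 := by exact_mod_cast hN.ne'
  rw [Finset.sum_sub_distrib, ← Finset.mul_sum, sum_ss]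
  simp
  field_simp

lemma rr_sq_le (hN : 0 < N) (σ τ : Fin N → Fin 2) : (rr σ τ / N)^2 ≤ 1 := by
  have hN' : (0 : ℝ) < N := by exact_mod_cast hN
  rw [sq_le_one_iff_abs_le_one, abs_div, abs_of_pos hN', div_le_one hN']
  exact rr_abs σ τ

lemma avg_pow_le (hN : 0 < N) (ht0 : 0 ≤ t) (ht1 : t < 1) (σ : Fin N → Fin 2) (k : ℕ) :
    ((∑ e, (1 - t * ss σ e)) / Fintype.card (Fin N × Fin N)) ^ k ≤ 1 := by
  rw [avg_phi hN]
  have h1 := rr_sq_le hN σ 0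
  have h2 := sq_nonneg (rr σ 0 / N)
  apply pow_le_one₀ <;> nlinarith

lemma Lk_nonpos (hN : 0 < N) (ht0 : 0 ≤ t) (ht1 : t < 1) (k : ℕ) : Lk N t k ≤ 0 := by
  have : NeZero N := ⟨hN.ne'⟩
  rw [← Real.log_one]
  apply Fk_log k _ (Yf_pos ht0 ht1) 1 one_pos
  unfold Yf
  rw [Fk_sum]
  simp only [Fk_mul, Fk_prod]
  calc _ ≤ ∑ σ : Fin N → Fin 2, (1 / 2 ^ N : ℝ) * 1 := by
        gcongr with σ
        exact avg_pow_le hN ht0 ht1 σ k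
    _ = 1 := by simp

lemma m_bound (hN : 0 < N) (ht0 : 0 ≤ t) (ht1 : t < 1) (k : ℕ) :
    Fk k (fun J => ∑ e, xe N t J e) ≤ 2 * N * (Real.log (2 * N + 1) - Lk N t k) := by
  have : NeZero N := ⟨hN.ne'⟩
  have hN' : (0 : ℝ) < N := by exact_mod_cast hN
  have h := coupled (ι := Fin N × Fin N) (A := Fin N → Fin 2) (1 / 2^N) (by positivity) (fun e σ => 1 - t * ss σ e)
    (fun e σ => phi_pos ht0 ht1 σ e) (fun σ => rr σ 0 ^ 2 / (2 * N)) k (2 * N + 1) (by positivity) ?_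
  · have e1 : (fun J => ∑ e, xe N t J e) = fun J => (2 * N) * ((∑ σ : Fin N → Fin 2, ((1 / 2 ^ N : ℝ) * ∏ e, (1 - t * ss σ e) ^ J e) * (rr σ 0 ^ 2 / (2 * N))) / (∑ σ : Fin N → Fin 2, (1 / 2 ^ N : ℝ) * ∏ e, (1 - t * ss σ e) ^ J e)) := by
      ext J
      simp only [xe, ← Finset.sum_div, Yf]
      rw [Finset.sum_comm, ← mul_div_assoc, Finset.mul_sum]
      congr 1
      apply Finset.sum_congr rfl; intro σ _
      rw [← Finset.mul_sum, sum_ss]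
      field_simp
    rw [e1, Fk_mul]
    exact mul_le_mul_of_nonneg_left h (by positivity)
  · refine le_trans ?_ (avg_exp hN 0)
    apply Finset.sum_le_sum
    intro σ _
    exact mul_le_of_le_one_right (by positivity) (avg_pow_le hN ht0 ht1 σ k)

lemma r_bound (hN : 0 < N) (ht0 : 0 ≤ t) (ht1 : t < 1) (k : ℕ) (lam : ℝ) (hl : 0 < lam)
    (hk : 2 * k / N * t^2 + lam ≤ 1) :
    Fk k (fun J => ∑ e, xe N t J e ^ 2) ≤ 2 * N / lam * (Real.log (2 * N + 1) - 2 * Lk N t k) := by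
  have : NeZero N := ⟨hN.ne'⟩
  have hN' : (0 : ℝ) < N := by exact_mod_cast hN
  have e0 : ∀ J : Fin N × Fin N → ℕ, ∀ h : (Fin N → Fin 2) → (Fin N → Fin 2) → ℝ,
    ∑ a : (Fin N → Fin 2) × (Fin N → Fin 2), ((1 / 2^N : ℝ)^2 * ∏ e, ((1 - t * ss a.1 e) * (1 - t * ss a.2 e)) ^ J e) * h a.1 a.2
    = ∑ σ : Fin N → Fin 2, ∑ τ : Fin N → Fin 2, ((1 / 2 ^ N : ℝ) * ∏ e, (1 - t * ss σ e) ^ J e) * ((1 / 2 ^ N : ℝ) * ∏ e, (1 - t * ss τ e) ^ J e) * h σ τ := by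
    intro J h
    rw [Fintype.sum_prod_type]
    refine Finset.sum_congr rfl fun σ _ => Finset.sum_congr rfl fun τ _ => ?_
    simp only [mul_pow, Finset.prod_mul_distrib]
    ring
  have e2 : ∀ J : Fin N × Fin N → ℕ, ∑ a : (Fin N → Fin 2) × (Fin N → Fin 2), ((1 / 2^N : ℝ)^2 * ∏ e, ((1 - t * ss a.1 e) * (1 - t * ss a.2 e)) ^ J e) = Yf N t J ^ 2 := by
    intro J
    have := e0 J (fun _ _ => 1)
    simp only [mul_one] at this
    rw [this, sq, Yf, Finset.sum_mul_sum]
  have h := coupled (ι := Fin N × Fin N) (A := (Fin N → Fin 2) × (Fin N → Fin 2)) ((1 / 2^N)^2) (by positivity)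
    (fun e a => (1 - t * ss a.1 e) * (1 - t * ss a.2 e))
    (fun e a => mul_pos (phi_pos ht0 ht1 a.1 e) (phi_pos ht0 ht1 a.2 e)) (fun a => lam * rr a.1 a.2 ^ 2 / (2 * N)) k (2 * N + 1) (by positivity) ?_
  · have e1 : (fun J => ∑ e, xe N t J e ^ 2) = fun J => (2 * N / lam) * ((∑ a : (Fin N → Fin 2) × (Fin N → Fin 2), ((1 / 2^N : ℝ)^2 * ∏ e, ((1 - t * ss a.1 e) * (1 - t * ss a.2 e)) ^ J e) * (lam * rr a.1 a.2 ^ 2 / (2 * N))) / (∑ a : (Fin N → Fin 2) × (Fin N → Fin 2), ((1 / 2^N : ℝ)^2 * ∏ e, ((1 - t * ss a.1 e) * (1 - t * ss a.2 e)) ^ J e))) := by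
      ext J
      rw [e2, e0 J (fun σ τ => lam * rr σ τ ^ 2 / (2 * N))]
      simp only [xe, div_pow, ← Finset.sum_div]
      rw [← mul_div_assoc]
      congr 1
      simp only [sq (∑ σ : Fin N → Fin 2, _), Finset.sum_mul_sum]
      rw [Finset.sum_comm, Finset.mul_sum]
      apply Finset.sum_congr rfl; intro σ _
      rw [Finset.sum_comm, Finset.mul_sum]
      apply Finset.sum_congr rfl; intro τ _
      rw [← sum_ss2]
      simp only [Finset.mul_sum, Finset.sum_div]
      apply Finset.sum_congr rfl; intro e _
      field_simp
    rw [e1, Fk_mul]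
    apply mul_le_mul_of_nonneg_left _ (by positivity)
    refine h.trans (le_of_eq ?_)
    simp only [e2, Real.log_pow, Fk_mul, Lk]
    norm_num
  · have hin : ∀ a : (Fin N → Fin 2) × (Fin N → Fin 2),
      (1 / 2^N : ℝ)^2 * Real.exp (lam * rr a.1 a.2 ^ 2 / (2 * N)) * ((∑ e, (1 - t * ss a.1 e) * (1 - t * ss a.2 e)) / Fintype.card (Fin N × Fin N)) ^ k
      ≤ (1 / 2^N : ℝ) * ((1/2^N : ℝ) * Real.exp (rr a.1 a.2 ^ 2 / (2 * N))) := by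
      intro a
      have hav : (∑ e, (1 - t * ss a.1 e) * (1 - t * ss a.2 e)) / Fintype.card (Fin N × Fin N) ≤ Real.exp (t^2 * (rr a.1 a.2 / N)^2) := by
        have : ∀ e, (1 - t * ss a.1 e) * (1 - t * ss a.2 e) = (1 - t * ss a.1 e) - t * ss a.2 e + t^2 * (ss a.1 e * ss a.2 e) := by
          intro e; ring
        have h3 : (∑ e, (1 - t * ss a.1 e) * (1 - t * ss a.2 e)) / Fintype.card (Fin N × Fin N) = 1 - t * (rr a.1 0 / N)^2 - t * (rr a.2 0 / N)^2 + t^2 * (rr a.1 a.2 / N)^2 := by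
          simp only [this, Finset.sum_add_distrib, Finset.sum_sub_distrib, ← Finset.mul_sum, sum_ss, sum_ss2]
          simp
          field_simp
        rw [h3]
        have h4 := Real.add_one_le_exp (t^2 * (rr a.1 a.2 / N)^2)
        have h5 := mul_nonneg ht0 (sq_nonneg (rr a.1 0 / N))
        have h6 := mul_nonneg ht0 (sq_nonneg (rr a.2 0 / N))
        linarith
      have hnn : 0 ≤ (∑ e, (1 - t * ss a.1 e) * (1 - t * ss a.2 e)) / Fintype.card (Fin N × Fin N) :=
        div_nonneg (Finset.sum_nonneg fun e _ => (mul_pos (phi_pos ht0 ht1 a.1 e) (phi_pos ht0 ht1 a.2 e)).le) (by positivity)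
      have hp := pow_le_pow_left₀ hnn hav k
      rw [← Real.exp_nat_mul] at hp
      calc _ ≤ (1 / 2^N : ℝ)^2 * Real.exp (lam * rr a.1 a.2 ^ 2 / (2 * N)) * Real.exp (k * (t^2 * (rr a.1 a.2 / N)^2)) := by gcongr
        _ = (1 / 2^N : ℝ) * ((1/2^N : ℝ) * Real.exp (lam * rr a.1 a.2 ^ 2 / (2 * N) + k * (t^2 * (rr a.1 a.2 / N)^2))) := by
          rw [Real.exp_add]; ring
        _ ≤ _ := by
          gcongr
          have : lam * rr a.1 a.2 ^ 2 / (2 * N) + k * (t^2 * (rr a.1 a.2 / N)^2) = (2 * k / N * t^2 + lam) * (rr a.1 a.2 ^ 2 / (2 * N)) := by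
            field_simp
            ring
          rw [this]
          exact mul_le_of_le_one_left (by positivity) hk
    refine (Finset.sum_le_sum fun a _ => hin a).trans ?_
    rw [← Finset.mul_sum, Fintype.sum_prod_type, Finset.sum_comm, Finset.mul_sum]
    calc _ ≤ ∑ τ : Fin N → Fin 2, (1 / 2^N : ℝ) * (2 * N + 1) := by
          gcongr with τ
          exact avg_exp hN τ
      _ = _ := by simp

lemma log_lb (ht0 : 0 ≤ t) (ht1 : t < 1) (x : ℝ) (hx : |x| ≤ 1) :
    -t * x - 1 / (1 - t) * x^2 ≤ Real.log (1 - t * x) := by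
  have hx := abs_le.1 hx
  have h1 : 1 - t ≤ 1 - t * x := by nlinarith
  have h0 : 0 < 1 - t := by linarith
  have h2 : 0 < 1 - t * x := by linarith
  have h3 := Real.one_sub_inv_le_log_of_pos h2
  have h4 : 1 - (1 - t * x)⁻¹ = - t * x - (t*x)^2 / (1 - t * x) := by field_simp; ring
  have h5 : (t*x)^2 / (1 - t * x) ≤ x^2 / (1 - t) := by
    apply div_le_div₀ (by positivity) _ h0 h1
    rw [mul_pow]
    exact mul_le_of_le_one_left (by positivity) (by nlinarith)
  have : 1 / (1 - t) * x^2 = x^2 / (1 - t) := by ring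
  linarith

lemma step (hN : 0 < N) (ht0 : 0 ≤ t) (ht1 : t < 1) (k : ℕ) (lam : ℝ) (hl : 0 < lam)
    (hk : 2 * k / N * t^2 + lam ≤ 1) :
    Real.log (2 * N + 1) - Lk N t (k+1) ≤
      (1 + (2 * t + 4 / ((1 - t) * lam)) / N) * (Real.log (2 * N + 1) - Lk N t k) := by
  have hN' : (0 : ℝ) < N := by exact_mod_cast hN
  have h0 : 0 < 1 - t := by linarith
  have h1 : Fk k (fun J => (1 / (N:ℝ)^2 * (-t)) * (∑ e, xe N t J e) + (1 / (N:ℝ)^2 * (- (1/(1-t)))) * (∑ e, xe N t J e ^ 2)) ≤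
     Fk k (fun J => (1 / (N:ℝ)^2) * ∑ e, Real.log (1 - t * xe N t J e)) := by
    apply Fk_mono; intro J
    rw [mul_assoc, mul_assoc, ← mul_add, Finset.mul_sum, Finset.mul_sum, ← Finset.sum_add_distrib]
    gcongr with e
    have := log_lb ht0 ht1 _ (xe_abs ht0 ht1 J e)
    linarith
  rw [Fk_add, Fk_mul, Fk_mul] at h1
  rw [Lk_succ hN ht0 ht1]
  have hm := m_bound hN ht0 ht1 k
  have hr := r_bound hN ht0 ht1 k lam hl hk
  have hL := Lk_nonpos hN ht0 ht1 k
  have hlog : 0 ≤ Real.log (2 * N + 1) := Real.log_nonneg (by linarith)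
  set ℓ := Real.log (2 * N + 1)
  set M := Fk k (fun J => ∑ e, xe N t J e)
  set R := Fk k (fun J => ∑ e, xe N t J e ^ 2)
  have a1 : (1 / (N:ℝ)^2 * t) * M ≤ (1 / (N:ℝ)^2 * t) * (2 * N * (ℓ - Lk N t k)) := by gcongr
  have a2 : (1 / (N:ℝ)^2 * (1/(1-t))) * R ≤ (1 / (N:ℝ)^2 * (1/(1-t))) * (2 * N / lam * (2 * (ℓ - Lk N t k))) := by
    apply mul_le_mul_of_nonneg_left _ (by positivity)
    apply hr.trans
    apply mul_le_mul_of_nonneg_left _ (by positivity)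
    linarith
  have a3 : (1 + (2 * t + 4 / ((1 - t) * lam)) / N) * (ℓ - Lk N t k) = (ℓ - Lk N t k) + (1 / (N:ℝ)^2 * t) * (2 * N * (ℓ - Lk N t k)) + (1 / (N:ℝ)^2 * (1/(1-t))) * (2 * N / lam * (2 * (ℓ - Lk N t k))) := by
    field_simp
    ring
  rw [a3]
  linarith

lemma gron (hN : 0 < N) (ht0 : 0 ≤ t) (ht1 : t < 1) (k1 : ℕ) (lam : ℝ) (hl : 0 < lam)
    (hk : 2 * k1 / N * t^2 + lam ≤ 1) :
    - Lk N t k1 ≤ Real.log (2 * N + 1) * Real.exp ((2 * t + 4 / ((1 - t) * lam)) / N * k1) := by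
  have hN' : (0 : ℝ) < N := by exact_mod_cast hN
  have h0 : 0 < 1 - t := by linarith
  have hlog : 0 ≤ Real.log (2 * N + 1) := Real.log_nonneg (by linarith)
  have key : ∀ k ≤ k1, Real.log (2 * N + 1) - Lk N t k ≤ Real.log (2 * N + 1) * Real.exp ((2 * t + 4 / ((1 - t) * lam)) / N * k) := by
    intro k
    induction k with
    | zero => intro _; simp [Lk_zero]
    | succ k ih =>
      intro hk1
      have h1 := ih (by omega)
      have h2 := step hN ht0 ht1 k lam hl (by
        refine le_trans ?_ hk
        have : (k : ℝ) ≤ k1 := by exact_mod_cast (by omega : k ≤ k1)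
        gcongr)
      set C := (2 * t + 4 / ((1 - t) * lam)) / N with hC
      have hC0 : 0 ≤ C := by positivity
      have h3 := Real.add_one_le_exp C
      calc _ ≤ _ := h2
        _ ≤ Real.exp C * (Real.log (2 * N + 1) * Real.exp (C * k)) := by
          apply mul_le_mul (by linarith) h1 _ (by positivity)
          have := Lk_nonpos hN ht0 ht1 k
          linarith
        _ = _ := by
          push_cast
          rw [mul_add, Real.exp_add]; ring_nf
  have := key k1 le_rfl
  linarith

lemma Lk_lip' (hN : 0 < N) (ht0 : 0 ≤ t) (ht1 : t < 1) (k l : ℕ) :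
    |Lk N t k - Lk N t l| ≤ - Real.log (1 - t) * |(k:ℝ) - l| := by
  have main : ∀ k d : ℕ, |Lk N t (k+d) - Lk N t k| ≤ - Real.log (1 - t) * d := by
    intro k d
    induction d with
    | zero => simp
    | succ d ih =>
      have := Lk_lip hN ht0 ht1 (k+d)
      have h2 := abs_sub_le (Lk N t (k+(d+1))) (Lk N t (k+d)) (Lk N t k)
      push_cast
      rw [← add_assoc] at *
      linarith
  rcases le_total l k with h | h
  · obtain ⟨d, rfl⟩ := Nat.exists_eq_add_of_le h
    simpa using main l d
  · obtain ⟨d, rfl⟩ := Nat.exists_eq_add_of_le h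
    rw [abs_sub_comm]
    simpa using main k d
end M

lemma logZ {N : ℕ} (β : ℝ) (hβ : 0 ≤ β) (J : Fin N × Fin N → ℕ) :
    Real.log (potts.Z 2 N (fun i j => β * (J (i, j) : ℝ))) =
      N * Real.log 2 + ((∑ e, J e : ℕ) : ℝ) * Real.log ((1 + Real.exp (-β)) / 2) +
        Real.log (Yf N ((1 - Real.exp (-β)) / (1 + Real.exp (-β))) J) := by
  have hE := Real.exp_pos (-β)
  have hE1 : Real.exp (-β) ≤ 1 := Real.exp_le_one_iff.2 (by linarith)
  set E := Real.exp (-β) with hEd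
  set t := (1 - E) / (1 + E) with ht
  have ht0 : 0 ≤ t := div_nonneg (by linarith) (by linarith)
  have ht1 : t < 1 := by rw [ht, div_lt_one (by linarith)]; linarith
  have hZ : potts.Z 2 N (fun i j => β * (J (i, j) : ℝ)) = 2 ^ N * ((1 + E) / 2) ^ (∑ e, J e) * Yf N t J := by
    unfold potts.Z Yf
    rw [Finset.mul_sum]
    apply Finset.sum_congr rfl
    intro σ _
    have hone : ∀ e : Fin N × Fin N, Real.exp (-(β * (J e : ℝ) * (if σ e.1 = σ e.2 then (1:ℝ) else 0)))
        = ((1 + E) / 2) ^ J e * (1 - t * ss σ e) ^ J e := by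
      intro e
      rw [← mul_pow, ss, sp_mul]
      have : (1 + E) / 2 * (1 - t * (if σ e.1 = σ e.2 then (1:ℝ) else -1)) = Real.exp (-(β * (if σ e.1 = σ e.2 then (1:ℝ) else 0))) := by
        split_ifs
        · rw [mul_one, mul_one, ← hEd, ht]; field_simp; ring
        · rw [mul_zero, neg_zero, Real.exp_zero, ht]; field_simp; ring
      rw [this, ← Real.exp_nat_mul]
      congr 1; ring
    have hH : potts.H 2 N σ (fun i j => β * (J (i, j) : ℝ)) = ∑ e : Fin N × Fin N, (β * (J e : ℝ) * (if σ e.1 = σ e.2 then (1:ℝ) else 0)) := by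
      rw [Fintype.sum_prod_type]; rfl
    rw [hH, ← Finset.sum_neg_distrib, Real.exp_sum]
    simp only [hone]
    rw [Finset.prod_mul_distrib, Finset.prod_pow_eq_pow_sum]
    field_simp
  have hY := Yf_pos (N := N) ht0 ht1 J
  rw [hZ, Real.log_mul (by positivity) hY.ne', Real.log_mul (by positivity) (by positivity), Real.log_pow, Real.log_pow]

lemma Yf_log_abs {N : ℕ} {t : ℝ} (ht0 : 0 ≤ t) (ht1 : t < 1) (J : Fin N × Fin N → ℕ) :
    |Real.log (Yf N t J)| ≤ (-Real.log (1 - t)) * ((∑ e, J e : ℕ) : ℝ) := by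
  have h1 : 0 < 1 - t := by linarith
  have hlo : (1 - t) ^ (∑ e, J e) ≤ Yf N t J := by
    calc _ = ∑ σ : Fin N → Fin 2, (1 / 2 ^ N : ℝ) * (1-t)^(∑ e, J e) := by simp
      _ ≤ _ := by
        unfold Yf
        gcongr with σ
        rw [← Finset.prod_pow_eq_pow_sum]
        apply Finset.prod_le_prod
        · intro e _; positivity
        · intro e _
          apply pow_le_pow_left₀ h1.le
          have := abs_le.1 (ss_abs σ e).le
          nlinarith
  have hhi : Yf N t J ≤ ((1 - t)⁻¹) ^ (∑ e, J e) := by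
    calc _ ≤ ∑ σ : Fin N → Fin 2, (1 / 2 ^ N : ℝ) * ((1-t)⁻¹)^(∑ e, J e) := by
          unfold Yf
          gcongr with σ
          rw [← Finset.prod_pow_eq_pow_sum]
          apply Finset.prod_le_prod
          · intro e _; exact pow_nonneg (phi_pos ht0 ht1 σ e).le _
          · intro e _
            apply pow_le_pow_left₀ (phi_pos ht0 ht1 σ e).le
            have := abs_le.1 (ss_abs σ e).le
            rw [← one_div, le_div_iff₀ h1]
            have h9 : 1 - t * ss σ e ≤ 1 + t := by nlinarith
            nlinarith [mul_le_mul_of_nonneg_right h9 h1.le, sq_nonneg t]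
      _ = _ := by simp
  have a := Real.log_le_log (by positivity) hlo
  have b := Real.log_le_log (Yf_pos ht0 ht1 J) hhi
  rw [Real.log_pow] at a b
  rw [Real.log_inv] at b
  rw [abs_le]; constructor <;> linarith

lemma p_hasSum {N : ℕ} (hN : 0 < N) (β c : ℝ) (hβ : 0 ≤ β) (hc : 0 < c) :
    HasSum (fun k : ℕ => poissonPMF (c * N / 2) k * (Real.log 2 + k / N * Real.log ((1 + Real.exp (-β)) / 2) +
        1 / N * Lk N ((1 - Real.exp (-β)) / (1 + Real.exp (-β))) k)) (potts.p 2 N β c) := by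
  have : NeZero N := ⟨hN.ne'⟩
  have hN' : (0 : ℝ) < N := by exact_mod_cast hN
  have hE := Real.exp_pos (-β)
  have hE1 : Real.exp (-β) ≤ 1 := Real.exp_le_one_iff.2 (by linarith)
  set E := Real.exp (-β) with hEd
  set t := (1 - E) / (1 + E) with ht
  have ht0 : 0 ≤ t := div_nonneg (by linarith) (by linarith)
  have ht1 : t < 1 := by rw [ht, div_lt_one (by linarith)]; linarith
  set g : (Fin N × Fin N → ℕ) → ℝ := fun J =>
    (Real.log 2 + (1 / N * Real.log ((1 + E) / 2)) * ((∑ e, J e : ℕ) : ℝ)) + 1 / N * Real.log (Yf N t J) with hg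
  have hgb : ∀ J, |g J| ≤ Real.log 2 + (|1 / N * Real.log ((1 + E) / 2)| + 1 / N * (-Real.log (1 - t))) * ((∑ e, J e : ℕ) : ℝ) := by
    intro J
    have h1 := Yf_log_abs ht0 ht1 J
    have h2 : |1 / (N:ℝ) * Real.log (Yf N t J)| ≤ 1 / N * ((-Real.log (1 - t)) * ((∑ e, J e : ℕ) : ℝ)) := by
      rw [abs_mul, abs_of_pos (by positivity : (0:ℝ) < 1 / N)]
      gcongr
    have h3 : |(1 / N * Real.log ((1 + E) / 2)) * ((∑ e, J e : ℕ) : ℝ)| = |1 / N * Real.log ((1 + E) / 2)| * ((∑ e, J e : ℕ) : ℝ) := by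
      rw [abs_mul, abs_of_nonneg (Nat.cast_nonneg (∑ e, J e) : (0:ℝ) ≤ _)]
    have h4 : |Real.log 2| = Real.log 2 := abs_of_nonneg (Real.log_nonneg (by norm_num))
    have h5 := abs_add_le (Real.log 2 + (1 / N * Real.log ((1 + E) / 2)) * ((∑ e, J e : ℕ) : ℝ)) (1 / N * Real.log (Yf N t J))
    have h6 := abs_add_le (Real.log 2) ((1 / N * Real.log ((1 + E) / 2)) * ((∑ e, J e : ℕ) : ℝ))
    simp only [hg]
    rw [add_mul]
    linarith
  have htr := transfer (μ := c / (2 * N)) (by positivity) g _ _ hgb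
  have e1 : (Fintype.card (Fin N × Fin N) : ℝ) * (c / (2 * N)) = c * N / 2 := by
    simp; field_simp
  have e2 : ∀ k, Fk k g = Real.log 2 + k / N * Real.log ((1 + E) / 2) + 1 / N * Lk N t k := by
    intro k
    rw [hg, Fk_add, Fk_lin, Fk_mul, Lk]
    ring
  have e3 : ∑' J : Fin N × Fin N → ℕ, (∏ i, poissonPMF (c / (2 * N)) (J i)) * g J = potts.p 2 N β c := by
    unfold potts.p potts.pmat potts.E
    rw [← (Equiv.curry (Fin N) (Fin N) ℕ).tsum_eq]
    congr 1
    ext J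
    rw [Fintype.prod_prod_type]
    simp only [Equiv.curry_apply, Function.curry_apply]
    rw [logZ β hβ J]
    congr 1
    simp only [hg]
    field_simp
    ring
  rw [e3, e1] at htr
  simpa only [e2] using htr

lemma p_bounds {N : ℕ} (hN : 0 < N) (β c ε : ℝ) (hβ : 0 ≤ β) (hc : 0 < c) (t : ℝ)
    (ht : t = (1 - Real.exp (-β)) / (1 + Real.exp (-β))) (hct : c * t^2 ≤ 1) (hε : 0 < ε) (hε1 : ε < 1) :
    potts.p 2 N β c ≤ potts.annealed 2 β c ∧
    potts.annealed 2 β c - (Real.log (2 * N + 1) * Real.exp ((2 * t + 4 / ((1 - t) * ε)) * (c / 2))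
      + (-Real.log (1 - t)) * (1 + ε * (c * N / 2) + Real.sqrt (c * N / 2))) / N ≤ potts.p 2 N β c := by
  have hN' : (0 : ℝ) < N := by exact_mod_cast hN
  have hE := Real.exp_pos (-β)
  have hE1 : Real.exp (-β) ≤ 1 := Real.exp_le_one_iff.2 (by linarith)
  have h := p_hasSum hN β c hβ hc
  rw [← ht] at h
  have hann : potts.annealed 2 β c = Real.log 2 + c / 2 * Real.log ((1 + Real.exp (-β)) / 2) := by
    unfold potts.annealed
    push_cast
    congr 3
    ring
  rw [hann]
  set E := Real.exp (-β) with hEd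
  have ht0 : 0 ≤ t := by rw [ht]; exact div_nonneg (by linarith) (by linarith)
  have ht1 : t < 1 := by rw [ht, div_lt_one (by linarith)]; linarith
  have h1t : 0 < 1 - t := by linarith
  set a := Real.log ((1 + E) / 2)
  set μ := c * N / 2 with hμ
  have hμ0 : 0 < μ := by positivity
  have hC : 0 ≤ -Real.log (1 - t) := by
    have := Real.log_nonpos h1t.le (by linarith)
    linarith
  set C := -Real.log (1 - t) with hCd
  constructor
  · have h2 := ((pois_sum μ).mul_left (Real.log 2)).add ((pois_mean μ).mul_left (a / N))
    have e : Real.log 2 * 1 + a / N * μ = Real.log 2 + c / 2 * a := by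
      rw [hμ]; field_simp
    rw [e] at h2
    refine hasSum_le (fun k => ?_) h h2
    have hL := Lk_nonpos hN ht0 ht1 k
    have hP := pois_nonneg hμ0.le k
    have : poissonPMF μ k * (1 / N * Lk N t k) ≤ 0 :=
      mul_nonpos_of_nonneg_of_nonpos hP (mul_nonpos_of_nonneg_of_nonpos (by positivity) hL)
    calc _ = Real.log 2 * poissonPMF μ k + a / N * (poissonPMF μ k * k) + poissonPMF μ k * (1 / N * Lk N t k) := by ring
      _ ≤ _ := by linarith
  · set s := Real.sqrt μ with hs
    have hs0 : 0 < s := Real.sqrt_pos.2 hμ0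
    have hss : s ^ 2 = μ := Real.sq_sqrt hμ0.le
    set k1 := ⌊(1 - ε) * μ⌋₊ with hk1
    have hk1a : (k1 : ℝ) ≤ (1 - ε) * μ := Nat.floor_le (mul_nonneg (by linarith) hμ0.le)
    have hk1b : (1 - ε) * μ < k1 + 1 := Nat.lt_floor_add_one _
    have hG := gron hN ht0 ht1 k1 ε hε (by
      have : 2 * (k1 : ℝ) / N ≤ (1 - ε) * c := by
        rw [div_le_iff₀ hN']
        rw [hμ] at hk1a
        linarith
      have h2 := mul_le_mul_of_nonneg_right this (sq_nonneg t)
      have h3 := mul_le_mul_of_nonneg_left hct (by linarith : 0 ≤ 1 - ε)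
      linarith)
    set G := Real.log (2 * N + 1) * Real.exp ((2 * t + 4 / ((1 - t) * ε)) * (c / 2)) with hGd
    have hG' : - Lk N t k1 ≤ G := by
      refine hG.trans ?_
      rw [hGd]
      apply mul_le_mul_of_nonneg_left _ (Real.log_nonneg (by linarith))
      apply Real.exp_le_exp.2
      rw [div_mul_eq_mul_div, mul_div_assoc]
      apply mul_le_mul_of_nonneg_left _ (by positivity)
      rw [div_le_iff₀ hN']
      nlinarith
    have hLk : ∀ k : ℕ, -(G + C * (1 + ε * μ + s / 2)) - C / (2 * s) * ((k:ℝ) - μ)^2 ≤ Lk N t k := by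
      intro k
      have l1 := (abs_le.1 (Lk_lip' hN ht0 ht1 k k1)).1
      have l2 : |(k:ℝ) - k1| ≤ 1 + ε * μ + s / 2 + 1 / (2 * s) * ((k:ℝ) - μ)^2 := by
        have m1 := abs_sub_le (k:ℝ) μ k1
        have m2 : |μ - k1| ≤ 1 + ε * μ := by
          rw [abs_le]; constructor <;> nlinarith
        have m3 : |(k:ℝ) - μ| ≤ s / 2 + 1 / (2 * s) * ((k:ℝ) - μ)^2 := by
          have : s / 2 + 1 / (2 * s) * ((k:ℝ) - μ)^2 = (s^2 + |(k:ℝ) - μ|^2) / (2 * s) := by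
            rw [sq_abs]; field_simp
          rw [this, le_div_iff₀ (by positivity)]
          nlinarith [sq_nonneg (s - |(k:ℝ) - μ|)]
        linarith
      have l3 := mul_le_mul_of_nonneg_left l2 hC
      have l4 : C * (1 + ε * μ + s / 2 + 1 / (2 * s) * ((k:ℝ) - μ)^2) = C * (1 + ε * μ + s / 2) + C / (2 * s) * ((k:ℝ) - μ)^2 := by ring
      linarith
    have h2 := (((pois_sum μ).mul_left (Real.log 2 - (G + C * (1 + ε * μ + s / 2)) / N)).add ((pois_mean μ).mul_left (a / N))).add ((pois_var μ).mul_left (-(C / (2 * s) / N)))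
    have e : (Real.log 2 - (G + C * (1 + ε * μ + s / 2)) / N) * 1 + a / N * μ + -(C / (2 * s) / N) * μ = Real.log 2 + c / 2 * a - (G + C * (1 + ε * μ + s)) / N := by
      have q1 : a / N * μ = c / 2 * a := by rw [hμ]; field_simp
      have q2 : C / (2 * s) / N * μ = C * s / 2 / N := by rw [← hss]; field_simp
      linear_combination q1 - q2
    rw [e] at h2
    refine hasSum_le (fun k => ?_) h2 h
    have hP := pois_nonneg hμ0.le k
    have := mul_le_mul_of_nonneg_left (mul_le_mul_of_nonneg_left (hLk k) (by positivity : (0:ℝ) ≤ 1 / N)) hP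
    calc _ = Real.log 2 * poissonPMF μ k + a / N * (poissonPMF μ k * k) + poissonPMF μ k * (1 / N * (-(G + C * (1 + ε * μ + s / 2)) - C / (2 * s) * ((k:ℝ) - μ)^2)) := by ring
      _ ≤ Real.log 2 * poissonPMF μ k + a / N * (poissonPMF μ k * k) + poissonPMF μ k * (1 / N * Lk N t k) := by linarith
      _ = _ := by ring

lemma err_tendsto (A C ε c : ℝ) (hc : 0 < c) :
    Filter.Tendsto (fun N : ℕ => (Real.log (2 * N + 1) * A + C * (1 + ε * (c * N / 2) + Real.sqrt (c * N / 2))) / N)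
      Filter.atTop (nhds (C * ε * c / 2)) := by
  have t0 : Filter.Tendsto (fun N : ℕ => (N : ℝ)) Filter.atTop Filter.atTop := tendsto_natCast_atTop_atTop
  have t1 : Filter.Tendsto (fun N : ℕ => Real.log (2 * N + 1) / N) Filter.atTop (nhds 0) := by
    have h := Real.tendsto_pow_log_div_mul_add_atTop (1/2) (-1/2) 1 (by norm_num)
    have h2 : Filter.Tendsto (fun N : ℕ => 2 * (N:ℝ) + 1) Filter.atTop Filter.atTop :=
      Filter.tendsto_atTop_add_const_right _ _ (t0.const_mul_atTop (by norm_num))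
    refine (h.comp h2).congr (fun N => ?_)
    simp only [Function.comp, pow_one]
    congr 1; ring
  have t2 : Filter.Tendsto (fun N : ℕ => 1 / (N:ℝ)) Filter.atTop (nhds 0) := tendsto_one_div_atTop_nhds_zero_nat
  have t3 : Filter.Tendsto (fun N : ℕ => Real.sqrt (c / 2 * (1 / (N:ℝ)))) Filter.atTop (nhds 0) := by
    have := (t2.const_mul (c/2)).sqrt
    simpa using this
  have t4 := ((t1.mul_const A).add (t2.const_mul C)).add ((t3.const_mul C).add (tendsto_const_nhds (x := C * ε * c / 2)))
  simp only [zero_mul, mul_zero, zero_add] at t4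
  refine t4.congr' ?_
  filter_upwards [Filter.eventually_gt_atTop 0] with N hN
  have hN' : (0 : ℝ) < N := by exact_mod_cast hN
  have : Real.sqrt (c / 2 * (1 / (N:ℝ))) = Real.sqrt (c * N / 2) / N := by
    rw [show c / 2 * (1 / (N:ℝ)) = (c * N / 2) / N^2 by field_simp, Real.sqrt_div (by positivity), Real.sqrt_sq hN'.le]
  rw [this]
  field_simp
  ring

lemma cond_ks (β c t : ℝ) (hβ : 0 ≤ β) (hc : 0 < c)
    (ht : t = (1 - Real.exp (-β)) / (1 + Real.exp (-β)))
    (h : c ≤ 1 ∨ (1 < c ∧ β ≤ -Real.log (1 - 2 / (1 + Real.sqrt c)))) : c * t^2 ≤ 1 := by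
  have hE := Real.exp_pos (-β)
  have hE1 : Real.exp (-β) ≤ 1 := Real.exp_le_one_iff.2 (by linarith)
  have ht0 : 0 ≤ t := by rw [ht]; exact div_nonneg (by linarith) (by linarith)
  have ht1 : t < 1 := by rw [ht, div_lt_one (by linarith)]; linarith
  rcases h with h | ⟨h1, h2⟩
  · have : t^2 ≤ 1 := by nlinarith
    nlinarith [sq_nonneg t]
  · have hs : 1 < Real.sqrt c := by rw [Real.lt_sqrt (by norm_num)]; simpa using h1
    have hss : Real.sqrt c ^ 2 = c := Real.sq_sqrt hc.le
    set s := Real.sqrt c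
    have hpos : 0 < 1 - 2 / (1 + s) := by
      rw [sub_pos, div_lt_one (by linarith)]; linarith
    have h3 : 1 - 2 / (1 + s) ≤ Real.exp (-β) := by
      rw [← Real.log_le_iff_le_exp hpos]; linarith
    have h4 : s * t ≤ 1 := by
      have h5 : 1 - Real.exp (-β) ≤ 2 / (1 + s) := by linarith
      rw [le_div_iff₀ (by linarith)] at h5
      rw [ht, ← mul_div_assoc, div_le_one (by linarith)]
      linarith
    have h6 : 0 ≤ s * t := by positivity
    rw [← hss, ← mul_pow]
    nlinarith

/-- for `q = 2`, if `c ≤ 1`, or `c > 1` and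
`0 ≤ β ≤ -ln(1 - 2/(1+√c))`, then the quenched pressure equals the annealed
pressure in the thermodynamic limit. -/
theorem statement12 (β c : ℝ) (hβ : 0 ≤ β) (hc : 0 < c)
    (h : c ≤ 1 ∨ (1 < c ∧ β ≤ -Real.log (1 - 2 / (1 + Real.sqrt c)))) :
    Filter.Tendsto (fun N => potts.p 2 N β c) Filter.atTop
      (nhds (potts.annealed 2 β c)) := by
  set t := (1 - Real.exp (-β)) / (1 + Real.exp (-β)) with ht
  have hct := cond_ks β c t hβ hc ht h
  have hE := Real.exp_pos (-β)
  have hE1 : Real.exp (-β) ≤ 1 := Real.exp_le_one_iff.2 (by linarith)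
  have ht0 : 0 ≤ t := by rw [ht]; exact div_nonneg (by linarith) (by linarith)
  have ht1 : t < 1 := by rw [ht, div_lt_one (by linarith)]; linarith
  have hC : 0 ≤ -Real.log (1 - t) := by
    have := Real.log_nonpos (by linarith : 0 ≤ 1 - t) (by linarith)
    linarith
  rw [Metric.tendsto_atTop']
  intro δ hδ
  set C := -Real.log (1 - t) with hCd
  obtain ⟨ε, hε, hε1, hεδ⟩ : ∃ ε : ℝ, 0 < ε ∧ ε < 1 ∧ C * ε * c / 2 < δ := by
    refine ⟨min (1/2) (δ / (C * c + 1)), by positivity, ?_, ?_⟩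
    · exact lt_of_le_of_lt (min_le_left _ _) (by norm_num)
    · have h1 : min (1/2) (δ / (C * c + 1)) ≤ δ / (C * c + 1) := min_le_right _ _
      rw [le_div_iff₀ (by positivity)] at h1
      have h0 : 0 < min (1/2) (δ / (C * c + 1)) := by positivity
      nlinarith
  have hT := err_tendsto (Real.exp ((2 * t + 4 / ((1 - t) * ε)) * (c / 2))) C ε c hc
  have hev := (hT.eventually (gt_mem_nhds hεδ)).and (Filter.eventually_gt_atTop 0)
  obtain ⟨n, hn⟩ := Filter.eventually_atTop.1 hev
  refine ⟨n, fun N hNn => ?_⟩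
  obtain ⟨h1, hN⟩ := hn N hNn.le
  obtain ⟨b1, b2⟩ := p_bounds hN β c ε hβ hc t ht hct hε hε1
  rw [Real.dist_eq, abs_lt]
  constructor <;> linarith
end
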